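/- Minimax lower bound with p = log m: There exist constants c₁, c₂ > 0 (depending only on the constant c) such that for every n ≥ 1, r ∈ {1,…,m}, ρ > 0, a > 0, setting δₙ⁽²⁾(r,ρ,a) := max_{l₀ ≤ l ≤ m} [ (a²·(min(r,l))·l/n) ∧ (ρ²/λ_l) ∧ ( (1/Q_{log m}²)·(a²·min(r,l)/l)·(1/log m) ) ], for every estimator Ŝₙ (a measurable map from (V×V×ℝ)ⁿ to 𝒮_V): sup_{P ∈ 𝒫_{r,ρ,a}} P^{⊗n}{ ‖Ŝₙ − S_P‖²_{L₂(Π²)} ≥ c₁·δₙ⁽²⁾(r,ρ,a) } ≥ c₂. -/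

import Mathlib

open MeasureTheory Finset
open scoped ENNReal NNReal

noncomputable section

/-- Sample space for one observation: a pair of vertices `(X, X')` and a response `Y`. -/
abbrev Obs (m : ℕ) := Fin m × Fin m × ℝ

/-- Squared Hilbert–Schmidt (Frobenius) norm of a kernel. -/
def hsNormSq {m : ℕ} (S : Matrix (Fin m) (Fin m) ℝ) : ℝ := ∑ u, ∑ v, (S u v) ^ 2

/-- Squared `L₂(Π²)` norm: `‖S‖²_{L₂(Π²)} = m⁻² ‖S‖₂²`. -/
def l2PiSq {m : ℕ} (S : Matrix (Fin m) (Fin m) ℝ) : ℝ := hsNormSq S / (m : ℝ) ^ 2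

/-- Squared Sobolev (Hilbert–Schmidt) norm `‖W^{1/2}S‖₂² = ∑ₖ λₖ ‖S φₖ‖²`,
expressed through the eigendata `(lam, φ)` of `W` (indexed by `1,…,m`). -/
def sobolevHSSq {m : ℕ} (lam : ℕ → ℝ) (φ : ℕ → Fin m → ℝ)
    (S : Matrix (Fin m) (Fin m) ℝ) : ℝ :=
  ∑ k ∈ Finset.Icc 1 m, lam k * ∑ u, (S.mulVec (φ k) u) ^ 2

/-- `φ₁,…,φ_m` are orthonormal in `ℝ^V` (Euclidean inner product). -/
def OrthonormalFamily (m : ℕ) (φ : ℕ → Fin m → ℝ) : Prop :=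
  ∀ j ∈ Finset.Icc 1 m, ∀ k ∈ Finset.Icc 1 m,
    (∑ v, φ j v * φ k v) = if j = k then (1 : ℝ) else 0

/-- Eigendata of the positive semidefinite kernel `W`: orthonormal eigenfunctions `φ`,
nonnegative nondecreasing eigenvalues `lam` (indexed by `1,…,m`), `k0` the smallest index
of a positive eigenvalue, and `λ_{k+1} ≤ c·λ_k` for `k ≥ k0`. -/
structure IsEigenData (m : ℕ) (c : ℝ) (lam : ℕ → ℝ) (φ : ℕ → Fin m → ℝ) (k0 : ℕ) : Prop where
  orth : OrthonormalFamily m φ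
  nonneg : ∀ k ∈ Finset.Icc 1 m, 0 ≤ lam k
  mono : ∀ k l : ℕ, 1 ≤ k → k ≤ l → l ≤ m → lam k ≤ lam l
  k0_mem : 1 ≤ k0 ∧ k0 ≤ m ∧ 0 < lam k0
  k0_min : ∀ k ∈ Finset.Icc 1 m, 0 < lam k → k0 ≤ k
  ratio : ∀ k : ℕ, k0 ≤ k → k + 1 ≤ m → lam (k + 1) ≤ c * lam k

/-- The design `(X, X')` is uniformly distributed on `V × V`. -/
def UniformDesign (m : ℕ) (P : Measure (Obs m)) : Prop :=
  ∀ u v : Fin m, P {z : Obs m | z.1 = u ∧ z.2.1 = v} = ((m : ℝ≥0∞) ^ 2)⁻¹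

/-- The regression kernel `S_P(u,v) = m²·E_P[Y·1{X=u, X'=v}] = E_P(Y | X=u, X'=v)`. -/
def regKernel (m : ℕ) (P : Measure (Obs m)) : Matrix (Fin m) (Fin m) ℝ :=
  Matrix.of fun u v =>
    (m : ℝ) ^ 2 * ∫ z : Obs m, (if z.1 = u ∧ z.2.1 = v then z.2.2 else 0) ∂P

/-- Membership in the class `𝒫_{r,ρ,a}` of sampling distributions. -/
def MemP (m : ℕ) (r : ℕ) (ρ a : ℝ) (lam : ℕ → ℝ) (φ : ℕ → Fin m → ℝ)
    (P : Measure (Obs m)) : Prop :=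
  IsProbabilityMeasure P ∧ UniformDesign m P ∧ (∀ᵐ z ∂P, |z.2.2| ≤ a) ∧
    (regKernel m P).IsSymm ∧ (regKernel m P).rank ≤ r ∧
    sobolevHSSq lam φ (regKernel m P) ≤ ρ ^ 2 * (m : ℝ) ^ 2


/-- `Q_p := max_{1≤j≤m} ‖√m·φ_j‖²_{L_p(Π)}`. -/
def Qp (m : ℕ) (p : ℝ) (φ : ℕ → Fin m → ℝ) : ℝ :=
  ⨆ j ∈ Finset.Icc 1 m, ((∑ v, |Real.sqrt m * φ j v| ^ p) / m) ^ (2 / p)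



/-- The quantity `δₙ⁽²⁾(r,ρ,a)` (with value in `ℝ≥0∞`, so that `ρ²/λ_l = ∞` when `λ_l = 0`). -/
def delta2 (m n r l0 : ℕ) (ρ a Q : ℝ) (lam : ℕ → ℝ) : ℝ≥0∞ :=
  ⨆ l ∈ Finset.Icc l0 m,
    min (ENNReal.ofReal (a ^ 2 * (min r l : ℝ) * (l : ℝ) / n))
      (min (ENNReal.ofReal (ρ ^ 2) / ENNReal.ofReal (lam l))
        (ENNReal.ofReal
          ((1 / Q ^ 2) * (a ^ 2 * (min r l : ℝ) / l) * (1 / Real.log m))))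


def sg (b : Bool) : ℝ := if b then 1 else -1

lemma sg_sq (b : Bool) : sg b ^ 2 = 1 := by cases b <;> simp [sg]
lemma sg_not (b : Bool) : sg (!b) = - sg b := by cases b <;> simp [sg]

lemma hoeff1 {ι : Type*} [Fintype ι] [DecidableEq ι] (x : ι → ℝ) (V t L : ℝ) (hV : 0 < V)
    (ht : 0 ≤ t) (hx : ∑ i, x i ^ 2 ≤ V) (hL : 2 * L * V ≤ t ^ 2) :
    (((univ : Finset (ι → Bool)).filter fun σ => t < ∑ i, sg (σ i) * x i).card : ℝ)
      ≤ 2 ^ (Fintype.card ι) * Real.exp (-L) := by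
  set s := t / V with hs
  have hs0 : 0 ≤ s := by positivity
  have h1 : ∑ σ : ι → Bool, Real.exp (s * ∑ i, sg (σ i) * x i)
      = ∏ i, ∑ b : Bool, Real.exp (s * (sg b * x i)) := by
    rw [Finset.prod_univ_sum, Fintype.piFinset_univ]
    refine Finset.sum_congr rfl fun σ _ => ?_
    rw [Finset.mul_sum, Real.exp_sum]
  have h2 : ∏ i, ∑ b : Bool, Real.exp (s * (sg b * x i))
      ≤ 2 ^ (Fintype.card ι) * Real.exp (s ^ 2 * V / 2) := by
    have : ∀ i, ∑ b : Bool, Real.exp (s * (sg b * x i)) ≤ 2 * Real.exp ((s * x i) ^ 2 / 2) := by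
      intro i
      have := Real.cosh_le_exp_half_sq (s * x i)
      rw [Real.cosh_eq] at this
      simp [sg]
      linarith
    calc _ ≤ ∏ i : ι, (2 * Real.exp ((s * x i) ^ 2 / 2)) :=
          Finset.prod_le_prod (fun i _ => Finset.sum_nonneg fun b _ => (Real.exp_pos _).le) fun i _ => this i
      _ = 2 ^ (Fintype.card ι) * Real.exp (∑ i, (s * x i) ^ 2 / 2) := by
          rw [Finset.prod_mul_distrib, Real.exp_sum]; simp
      _ ≤ _ := by
          gcongr
          rw [← Finset.sum_div]
          have : ∑ i, (s * x i) ^ 2 = s ^ 2 * ∑ i, x i ^ 2 := by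
            rw [Finset.mul_sum]; exact Finset.sum_congr rfl fun i _ => by ring
          rw [this]; gcongr
  have h3 : (((univ : Finset (ι → Bool)).filter fun σ => t < ∑ i, sg (σ i) * x i).card : ℝ)
      * Real.exp (s * t) ≤ ∑ σ : ι → Bool, Real.exp (s * ∑ i, sg (σ i) * x i) := by
    rw [← nsmul_eq_mul]
    refine (Finset.card_nsmul_le_sum _ _ _ ?_).trans
      (Finset.sum_le_sum_of_subset_of_nonneg (Finset.filter_subset _ _) fun σ _ _ => (Real.exp_pos _).le)
    intro σ hσ
    simp only [Finset.mem_filter] at hσ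
    have := hσ.2.le
    gcongr
  have h4 := h3.trans (h1.le.trans h2)
  have h5 : s ^ 2 * V / 2 - s * t ≤ -L := by
    rw [hs]
    have : (t / V) ^ 2 * V / 2 - t / V * t = - (t ^ 2 / (2 * V)) := by field_simp; ring
    rw [this, neg_le_neg_iff, le_div_iff₀ (by positivity)]
    linarith
  rw [← le_div_iff₀ (Real.exp_pos _), mul_div_assoc, ← Real.exp_sub] at h4
  refine h4.trans ?_
  gcongr

lemma hoeff {ι : Type*} [Fintype ι] [DecidableEq ι] (x : ι → ℝ) (V t L : ℝ) (hV : 0 < V)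
    (ht : 0 ≤ t) (hx : ∑ i, x i ^ 2 ≤ V) (hL : 2 * L * V ≤ t ^ 2) :
    (((univ : Finset (ι → Bool)).filter fun σ => t < |∑ i, sg (σ i) * x i|).card : ℝ)
      ≤ 2 * (2 ^ (Fintype.card ι) * Real.exp (-L)) := by
  have a1 := hoeff1 x V t L hV ht hx hL
  have a2 := hoeff1 (fun i => - x i) V t L hV ht (by simpa using hx) hL
  have : ((univ : Finset (ι → Bool)).filter fun σ => t < |∑ i, sg (σ i) * x i|) ⊆
      ((univ : Finset (ι → Bool)).filter fun σ => t < ∑ i, sg (σ i) * x i) ∪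
      ((univ : Finset (ι → Bool)).filter fun σ => t < ∑ i, sg (σ i) * -x i) := by
    intro σ
    simp only [Finset.mem_filter, Finset.mem_union, Finset.mem_univ, true_and, mul_neg,
      Finset.sum_neg_distrib]
    exact lt_abs.1
  have h := (Finset.card_le_card this).trans (Finset.card_union_le _ _)
  have h' : (((univ : Finset (ι → Bool)).filter fun σ => t < |∑ i, sg (σ i) * x i|).card : ℝ) ≤ 
     (((univ : Finset (ι → Bool)).filter fun σ => t < ∑ i, sg (σ i) * x i).card : ℝ) + (((univ : Finset (ι → Bool)).filter fun σ => t < ∑ i, sg (σ i) * -x i).card : ℝ) := by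
    exact_mod_cast h
  linarith

/-- Le Cam type inequality. -/
lemma min_lower {Z : Type*} [Fintype Z] [DecidableEq Z] (n : ℕ) (hn : 1 ≤ n) (q q' : Z → ℝ)
    (hq : ∀ z, 0 ≤ q z) (hq' : ∀ z, 0 ≤ q' z) (hs : ∑ z, q z = 1) (hs' : ∑ z, q' z = 1)
    (h : 1 - 1 / (2 * n) ≤ ∑ z, Real.sqrt (q z * q' z)) :
    1 / 8 ≤ ∑ x : Fin n → Z, min (∏ k, q (x k)) (∏ k, q' (x k)) := by
  have e1 : ∀ w : Z → ℝ, ∑ x : Fin n → Z, ∏ k, w (x k) = (∑ z, w z) ^ n := by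
    intro w
    have := Finset.prod_univ_sum (fun _ : Fin n => (univ : Finset Z)) (fun _ z => w z)
    rw [Fintype.piFinset_univ] at this
    rw [← this]; simp
  have e2 : ∑ x : Fin n → Z, Real.sqrt ((∏ k, q (x k)) * ∏ k, q' (x k))
      = (∑ z, Real.sqrt (q z * q' z)) ^ n := by
    rw [← e1]
    refine Finset.sum_congr rfl fun x _ => ?_
    rw [← Finset.prod_mul_distrib, Real.sqrt_eq_rpow, ← Real.finsetProd_rpow]
    · simp [Real.sqrt_eq_rpow]
    · intro i _; exact mul_nonneg (hq _) (hq' _)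
  have hn' : (1 : ℝ) ≤ n := by exact_mod_cast hn
  have e3 : (1 / 2 : ℝ) ≤ (∑ z, Real.sqrt (q z * q' z)) ^ n := by
    have h0 : (1 : ℝ) / (2 * n) ≤ 1 := by
      rw [div_le_one (by positivity)]; linarith
    have := one_add_mul_le_pow (a := -(1 / (2 * (n : ℝ)))) (by linarith) n
    have e : 1 + (n : ℝ) * -(1 / (2 * (n : ℝ))) = 1 / 2 := by field_simp; ring
    rw [e] at this
    refine this.trans ?_
    apply pow_le_pow_left₀ <;> linarith
  set f := fun x : Fin n → Z => ∏ k, q (x k) with hf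
  set f' := fun x : Fin n → Z => ∏ k, q' (x k) with hf'
  have f0 : ∀ x, 0 ≤ f x := fun x => Finset.prod_nonneg fun k _ => hq _
  have f0' : ∀ x, 0 ≤ f' x := fun x => Finset.prod_nonneg fun k _ => hq' _
  have cs := Finset.sum_mul_sq_le_sq_mul_sq (univ : Finset (Fin n → Z))
    (fun x => Real.sqrt (min (f x) (f' x))) (fun x => Real.sqrt (max (f x) (f' x)))
  have e4 : ∀ x, Real.sqrt (min (f x) (f' x)) * Real.sqrt (max (f x) (f' x)) = Real.sqrt (f x * f' x) := by
    intro x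
    rw [← Real.sqrt_mul (le_min (f0 x) (f0' x)), min_mul_max]
  have e5 : ∀ x, Real.sqrt (min (f x) (f' x)) ^ 2 = min (f x) (f' x) := fun x =>
    Real.sq_sqrt (le_min (f0 x) (f0' x))
  have e6 : ∀ x, Real.sqrt (max (f x) (f' x)) ^ 2 = max (f x) (f' x) := fun x =>
    Real.sq_sqrt (le_max_of_le_left (f0 x))
  simp only [e4, e5, e6] at cs
  have e2' : ∑ x, Real.sqrt (f x * f' x) = (∑ z, Real.sqrt (q z * q' z)) ^ n := e2
  rw [e2'] at cs
  have e7 : ∑ x, max (f x) (f' x) ≤ 2 := by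
    have : ∑ x, max (f x) (f' x) ≤ ∑ x, (f x + f' x) :=
      Finset.sum_le_sum fun x _ => max_le_add_of_nonneg (f0 x) (f0' x)
    rw [Finset.sum_add_distrib] at this
    have a1 : ∑ x, f x = 1 := by rw [hf, e1, hs, one_pow]
    have a2 : ∑ x, f' x = 1 := by rw [hf', e1, hs', one_pow]
    linarith
  have e8 : 0 ≤ ∑ x, min (f x) (f' x) := Finset.sum_nonneg fun x _ => le_min (f0 x) (f0' x)
  show 1 / 8 ≤ ∑ x, min (f x) (f' x)
  nlinarith

def bflip {ι : Type*} [DecidableEq ι] (i : ι) (σ : ι → Bool) : ι → Bool :=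
  Function.update σ i (!(σ i))

lemma bflip_bflip {ι : Type*} [DecidableEq ι] (i : ι) (σ : ι → Bool) : bflip i (bflip i σ) = σ := by
  simp [bflip]

lemma bflip_inj {ι : Type*} [DecidableEq ι] (i : ι) : Function.Injective (bflip i) := fun σ τ h => by
  rw [← bflip_bflip i σ, h, bflip_bflip]

lemma assouad {ι X : Type*} [Fintype ι] [DecidableEq ι] [Fintype X]
    (f : (ι → Bool) → X → ℝ) (est : X → ι → Bool) (I : Finset ι) (hI : I.Nonempty)
    (G : Finset (ι → Bool)) (hf : ∀ σ ∈ G, ∀ x, 0 ≤ f σ x) (hf1 : ∀ σ ∈ G, ∑ x, f σ x = 1)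
    (hG : 4 * (Gᶜ.card : ℝ) ≤ 2 ^ (Fintype.card ι))
    (hmin : ∀ σ ∈ G, ∀ i ∈ I, bflip i σ ∈ G → 1 / 8 ≤ ∑ x, min (f σ x) (f (bflip i σ) x)) :
    ∃ σ ∈ G, 1 / 64 ≤ ∑ x ∈ univ.filter (fun x =>
      (I.card : ℝ) / 64 ≤ ((I.filter fun i => est x i ≠ σ i).card : ℝ)), f σ x := by
  classical
  set M : ℝ := 2 ^ (Fintype.card ι) with hM
  have hMpos : 0 < M := by positivity
  have hN : (0 : ℝ) < I.card := by exact_mod_cast hI.card_pos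
  have hGc : (G.card : ℝ) + Gᶜ.card = M := by
    have := Finset.card_add_card_compl G
    rw [hM]
    have h2 : Fintype.card (ι → Bool) = 2 ^ (Fintype.card ι) := by simp
    rw [h2] at this
    exact_mod_cast this
  set e : (ι → Bool) → ι → ℝ := fun σ i => ∑ x, if est x i ≠ σ i then f σ x else 0 with he
  have he0 : ∀ σ ∈ G, ∀ i, 0 ≤ e σ i := fun σ hσ i => Finset.sum_nonneg fun x _ => by
    split_ifs; exacts [hf σ hσ x, le_rfl]
  have hpair : ∀ σ ∈ G, ∀ i ∈ I, bflip i σ ∈ G → 1 / 8 ≤ e σ i + e (bflip i σ) i := by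
    intro σ hσ i hi hfl
    refine (hmin σ hσ i hi hfl).trans ?_
    rw [he, ← Finset.sum_add_distrib]
    refine Finset.sum_le_sum fun x _ => ?_
    have a1 := hf σ hσ x
    have a2 := hf _ hfl x
    have : bflip i σ i = !(σ i) := by simp [bflip]
    simp only [this]
    by_cases hh : est x i = σ i
    · have : est x i ≠ !(σ i) := by rw [hh]; simp
      simp [hh]
    · simp only [ne_eq, hh, not_false_eq_true, if_true]
      split_ifs
      · exact (min_le_left _ _).trans (by linarith)
      · exact (min_le_left _ _).trans (by linarith)
  have hcoord : ∀ i ∈ I, M / 32 ≤ ∑ σ ∈ G, e σ i := by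
    intro i hi
    set G2 := G.filter (fun σ => bflip i σ ∈ G) with hG2
    have s1 : ∑ σ ∈ G2, e σ i ≤ ∑ σ ∈ G, e σ i :=
      Finset.sum_le_sum_of_subset_of_nonneg (Finset.filter_subset _ _) fun σ hσ _ => he0 σ hσ i
    have s2 : ∑ σ ∈ G2, e (bflip i σ) i = ∑ σ ∈ G2, e σ i := by
      refine Finset.sum_nbij' (bflip i) (bflip i) ?_ ?_ ?_ ?_ ?_
      · intro σ hσ
        simp only [hG2, Finset.mem_filter, bflip_bflip] at hσ ⊢
        exact hσ.symm
      · intro σ hσ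
        simp only [hG2, Finset.mem_filter, bflip_bflip] at hσ ⊢
        exact hσ.symm
      · intro σ _; exact bflip_bflip i σ
      · intro σ _; exact bflip_bflip i σ
      · intro σ _; rfl
    have s3 : (G2.card : ℝ) * (1 / 8) ≤ ∑ σ ∈ G2, (e σ i + e (bflip i σ) i) := by
      rw [← nsmul_eq_mul]
      refine Finset.card_nsmul_le_sum _ _ _ fun σ hσ => ?_
      simp only [hG2, Finset.mem_filter] at hσ
      exact hpair σ hσ.1 i hi hσ.2
    rw [Finset.sum_add_distrib, s2] at s3
    have s4 : (G.card : ℝ) ≤ G2.card + Gᶜ.card := by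
      have : G ⊆ G2 ∪ (Gᶜ).image (bflip i) := by
        intro σ hσ
        simp only [hG2, Finset.mem_union, Finset.mem_filter, Finset.mem_image, Finset.mem_compl]
        by_cases hh : bflip i σ ∈ G
        · exact Or.inl ⟨hσ, hh⟩
        · exact Or.inr ⟨_, hh, bflip_bflip i σ⟩
      have := (Finset.card_le_card this).trans
        ((Finset.card_union_le _ _).trans (Nat.add_le_add_left Finset.card_image_le _))
      exact_mod_cast this
    linarith
  have htot : (I.card : ℝ) * (M / 32) ≤ ∑ σ ∈ G, ∑ i ∈ I, e σ i := by
    rw [Finset.sum_comm, ← nsmul_eq_mul]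
    exact Finset.card_nsmul_le_sum _ _ _ hcoord
  have hGne : G.Nonempty := by
    rw [Finset.nonempty_iff_ne_empty]
    rintro rfl
    simp at hGc hG
    linarith
  obtain ⟨σ, hσ, hσe⟩ : ∃ σ ∈ G, (I.card : ℝ) / 32 ≤ ∑ i ∈ I, e σ i := by
    by_contra! hcon
    have := Finset.sum_lt_sum_of_nonempty hGne hcon
    rw [Finset.sum_const, nsmul_eq_mul] at this
    have h3 : (G.card : ℝ) ≤ M := by
      have : (0 : ℝ) ≤ Gᶜ.card := by positivity
      linarith
    nlinarith
  refine ⟨σ, hσ, ?_⟩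
  have hswap : ∑ i ∈ I, e σ i = ∑ x, f σ x * ((I.filter fun i => est x i ≠ σ i).card : ℝ) := by
    rw [he, Finset.sum_comm]
    refine Finset.sum_congr rfl fun x _ => ?_
    rw [← Finset.sum_filter, Finset.sum_const, nsmul_eq_mul, mul_comm]
  rw [hswap] at hσe
  have hb : ∑ x, f σ x * ((I.filter fun i => est x i ≠ σ i).card : ℝ) ≤
      ∑ x, ((if (I.card : ℝ) / 64 ≤ ((I.filter fun i => est x i ≠ σ i).card : ℝ) then f σ x else 0) * I.card
        + f σ x * (I.card / 64)) := by
    refine Finset.sum_le_sum fun x _ => ?_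
    have a1 := hf σ hσ x
    have a2 : ((I.filter fun i => est x i ≠ σ i).card : ℝ) ≤ I.card := by
      exact_mod_cast Finset.card_filter_le _ _
    split_ifs with hh
    · nlinarith
    · nlinarith
  rw [Finset.sum_add_distrib, ← Finset.sum_mul, ← Finset.sum_mul, hf1 σ hσ, ← Finset.sum_filter] at hb
  by_contra! hcon
  nlinarith

def qd {m : ℕ} (a : ℝ) (S : Matrix (Fin m) (Fin m) ℝ) (z : Fin m × Fin m × Bool) : ℝ :=
  (1 + sg z.2.2 * (S z.1 z.2.1 / a)) / (2 * (m : ℝ) ^ 2)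

def gz {m : ℕ} (a : ℝ) (z : Fin m × Fin m × Bool) : Obs m := (z.1, z.2.1, a * sg z.2.2)

def PS {m : ℕ} (a : ℝ) (S : Matrix (Fin m) (Fin m) ℝ) : Measure (Obs m) :=
  ∑ z, ENNReal.ofReal (qd a S z) • Measure.dirac (gz a z)

lemma gz_inj {m : ℕ} {a : ℝ} (ha : 0 < a) : Function.Injective (gz (m := m) a) := by
  rintro ⟨u, v, b⟩ ⟨u', v', b'⟩ h
  simp only [gz, Prod.mk.injEq] at h
  obtain ⟨rfl, rfl, h⟩ := h
  have := mul_left_cancel₀ ha.ne' h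
  cases b <;> cases b' <;> simp [sg] at this ⊢ <;> norm_num at this

lemma qd_lower {m : ℕ} (hm : 1 ≤ m) {a : ℝ} (ha : 0 < a) {S : Matrix (Fin m) (Fin m) ℝ}
    (hS : ∀ u v, |S u v| ≤ a / 2) (z : Fin m × Fin m × Bool) :
    1 / (4 * (m : ℝ) ^ 2) ≤ qd a S z := by
  have hm' : (0 : ℝ) < m := by exact_mod_cast hm
  have h1 : |S z.1 z.2.1 / a| ≤ 1 / 2 := by
    rw [abs_div, abs_of_pos ha, div_le_iff₀ ha]; linarith [hS z.1 z.2.1]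
  have h2 : 1 / 2 ≤ 1 + sg z.2.2 * (S z.1 z.2.1 / a) := by
    rw [abs_le] at h1
    cases z.2.2 <;> simp only [sg] <;> norm_num <;> linarith [h1.1, h1.2]
  rw [qd, show 1 / (4 * (m : ℝ) ^ 2) = (1 / 2) / (2 * (m : ℝ) ^ 2) by field_simp; norm_num]
  gcongr

lemma qd_nonneg {m : ℕ} (hm : 1 ≤ m) {a : ℝ} (ha : 0 < a) {S : Matrix (Fin m) (Fin m) ℝ}
    (hS : ∀ u v, |S u v| ≤ a / 2) (z : Fin m × Fin m × Bool) : 0 ≤ qd a S z :=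
  le_trans (by positivity) (qd_lower hm ha hS z)

lemma qd_pair {m : ℕ} (hm : 1 ≤ m) (a : ℝ) (S : Matrix (Fin m) (Fin m) ℝ) (u v : Fin m) :
    ∑ b : Bool, qd a S (u, v, b) = ((m : ℝ) ^ 2)⁻¹ := by
  have hm' : (0 : ℝ) < m := by exact_mod_cast hm
  simp [qd, sg]
  field_simp
  ring

lemma qd_sum {m : ℕ} (hm : 1 ≤ m) (a : ℝ) (S : Matrix (Fin m) (Fin m) ℝ) :
    ∑ z, qd a S z = 1 := by
  have hm' : (0 : ℝ) < m := by exact_mod_cast hm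
  simp only [Fintype.sum_prod_type, qd_pair hm]
  simp
  field_simp

lemma qd_aff {m n : ℕ} (hm : 1 ≤ m) (hn : 1 ≤ n) {a : ℝ} (ha : 0 < a)
    {S S' : Matrix (Fin m) (Fin m) ℝ}
    (hS : ∀ u v, |S u v| ≤ a / 2) (hS' : ∀ u v, |S' u v| ≤ a / 2)
    (h : hsNormSq (S - S') ≤ a ^ 2 * (m : ℝ) ^ 2 / n) :
    1 - 1 / (2 * n) ≤ ∑ z, Real.sqrt (qd a S z * qd a S' z) := by
  have hm' : (0 : ℝ) < m := by exact_mod_cast hm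
  have hn' : (0 : ℝ) < n := by exact_mod_cast hn
  have key : ∀ z, (qd a S z + qd a S' z) / 2 - (m : ℝ) ^ 2 * (qd a S z - qd a S' z) ^ 2
      ≤ Real.sqrt (qd a S z * qd a S' z) := by
    intro z
    have l1 := qd_lower hm ha hS z
    have l2 := qd_lower hm ha hS' z
    have n1 := qd_nonneg hm ha hS z
    have n2 := qd_nonneg hm ha hS' z
    set q := qd a S z
    set q' := qd a S' z
    rw [Real.sqrt_mul n1]
    have s1 := Real.sq_sqrt n1
    have s2 := Real.sq_sqrt n2
    have p1 := Real.sqrt_nonneg q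
    have p2 := Real.sqrt_nonneg q'
    set x := Real.sqrt q
    set y := Real.sqrt q'
    have hM : 1 ≤ 2 * (m : ℝ) ^ 2 * (x + y) ^ 2 := by
      have : 1 / (2 * (m : ℝ) ^ 2) ≤ (x + y) ^ 2 := by
        have e : 1 / (2 * (m : ℝ) ^ 2) = 1 / (4 * (m : ℝ) ^ 2) + 1 / (4 * (m : ℝ) ^ 2) := by
          field_simp; norm_num
        rw [e]; nlinarith [mul_nonneg p1 p2]
      rw [div_le_iff₀ (by positivity)] at this
      linarith
    have e2 : (q - q') ^ 2 = (x - y) ^ 2 * (x + y) ^ 2 := by rw [← s1, ← s2]; ring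
    rw [e2]
    nlinarith [mul_le_mul_of_nonneg_left hM (sq_nonneg (x - y))]
  have hsum := Finset.sum_le_sum fun z (_ : z ∈ (univ : Finset (Fin m × Fin m × Bool))) => key z
  refine le_trans ?_ hsum
  rw [Finset.sum_sub_distrib, ← Finset.sum_div, Finset.sum_add_distrib, qd_sum hm, qd_sum hm,
    ← Finset.mul_sum]
  have e3 : ∑ z : Fin m × Fin m × Bool, (qd a S z - qd a S' z) ^ 2
      = hsNormSq (S - S') / (2 * a ^ 2 * (m : ℝ) ^ 4) := by
    simp only [Fintype.sum_prod_type, hsNormSq, Finset.sum_div]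
    refine Finset.sum_congr rfl fun u _ => Finset.sum_congr rfl fun v _ => ?_
    simp [qd, sg]
    field_simp
    ring
  rw [e3]
  have e4 : (m : ℝ) ^ 2 * (hsNormSq (S - S') / (2 * a ^ 2 * (m : ℝ) ^ 4))
      ≤ (m : ℝ) ^ 2 * ((a ^ 2 * (m : ℝ) ^ 2 / n) / (2 * a ^ 2 * (m : ℝ) ^ 4)) := by gcongr
  have e5 : (m : ℝ) ^ 2 * ((a ^ 2 * (m : ℝ) ^ 2 / n) / (2 * a ^ 2 * (m : ℝ) ^ 4)) = 1 / (2 * n) := by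
    field_simp
  linarith

lemma PS_apply {m : ℕ} (a : ℝ) (S : Matrix (Fin m) (Fin m) ℝ) (s : Set (Obs m)) :
    PS a S s = ∑ z, ENNReal.ofReal (qd a S z) * s.indicator 1 (gz a z) := by
  classical
  have : ∀ z : Fin m × Fin m × Bool, (Measure.dirac (gz a z)) s = s.indicator 1 (gz a z) := by
    intro z
    exact Measure.dirac_apply _ _
  simp [PS, Measure.finsetSum_apply, this]

lemma PS_prob {m : ℕ} (hm : 1 ≤ m) {a : ℝ} (ha : 0 < a) {S : Matrix (Fin m) (Fin m) ℝ}
    (hS : ∀ u v, |S u v| ≤ a / 2) : IsProbabilityMeasure (PS a S) := by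
  constructor
  rw [PS_apply]
  simp only [Set.indicator_univ, Pi.one_apply, mul_one]
  rw [← ENNReal.ofReal_sum_of_nonneg fun z _ => qd_nonneg hm ha hS z, qd_sum hm]
  simp

lemma PS_unif {m : ℕ} (hm : 1 ≤ m) {a : ℝ} (ha : 0 < a) {S : Matrix (Fin m) (Fin m) ℝ}
    (hS : ∀ u v, |S u v| ≤ a / 2) : UniformDesign m (PS a S) := by
  have hm' : (0 : ℝ) < m := by exact_mod_cast hm
  intro u v
  rw [PS_apply]
  have : ∀ z : Fin m × Fin m × Bool, ENNReal.ofReal (qd a S z) *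
      ({z : Obs m | z.1 = u ∧ z.2.1 = v} : Set (Obs m)).indicator 1 (gz a z)
      = ENNReal.ofReal (if z.1 = u ∧ z.2.1 = v then qd a S z else 0) := by
    intro z
    by_cases h : z.1 = u ∧ z.2.1 = v
    · simp [Set.indicator, gz, h]
    · simp only [Set.indicator, gz, Set.mem_ofPred_eq, h, if_false]; simp
  rw [Finset.sum_congr rfl fun z _ => this z, ← ENNReal.ofReal_sum_of_nonneg]
  · have e : ∑ z : Fin m × Fin m × Bool, (if z.1 = u ∧ z.2.1 = v then qd a S z else 0)
        = ((m : ℝ) ^ 2)⁻¹ := by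
      rw [← qd_pair hm a S u v]
      simp only [Fintype.sum_prod_type]
      rw [Finset.sum_eq_single u, Finset.sum_eq_single v]
      · simp
      · intro b _ hb; simp [hb]
      · simp
      · intro b _ hb; simp [hb]
      · simp
    rw [e, ENNReal.ofReal_inv_of_pos (by positivity), ENNReal.ofReal_pow hm'.le]
    simp
  · intro z _
    split_ifs
    exacts [qd_nonneg hm ha hS z, le_rfl]

lemma PS_bdd {m : ℕ} {a : ℝ} (ha : 0 < a) (S : Matrix (Fin m) (Fin m) ℝ) :
    ∀ᵐ z ∂(PS a S), |z.2.2| ≤ a := by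
  rw [ae_iff, PS_apply]
  refine Finset.sum_eq_zero fun z _ => ?_
  have : gz a z ∉ {a_1 : Obs m | ¬|a_1.2.2| ≤ a} := by
    simp only [Set.mem_ofPred_eq, not_not, gz, abs_mul, abs_of_pos ha]
    cases z.2.2 <;> simp [sg]
  rw [Set.indicator_of_notMem this, mul_zero]

lemma PS_reg {m : ℕ} (hm : 1 ≤ m) {a : ℝ} (ha : 0 < a) {S : Matrix (Fin m) (Fin m) ℝ}
    (hS : ∀ u v, |S u v| ≤ a / 2) : regKernel m (PS a S) = S := by
  have hm' : (0 : ℝ) < m := by exact_mod_cast hm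
  ext u v
  simp only [regKernel, Matrix.of_apply, PS]
  rw [integral_finsetSum_measure]
  · simp only [integral_smul_measure, integral_dirac]
    have e : ∀ z : Fin m × Fin m × Bool, (ENNReal.ofReal (qd a S z)).toReal = qd a S z :=
      fun z => ENNReal.toReal_ofReal (qd_nonneg hm ha hS z)
    simp only [e, gz, smul_eq_mul, Fintype.sum_prod_type]
    rw [Finset.sum_eq_single u, Finset.sum_eq_single v]
    · simp [qd, sg]
      field_simp
      ring
    · intro b _ hb; simp [hb]
    · simp
    · intro b _ hb; simp [hb]
    · simp
  · intro z _
    refine Integrable.smul_measure ?_ ENNReal.ofReal_ne_top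
    exact integrable_dirac (by simp)

lemma PS_pi {m n : ℕ} (hm : 1 ≤ m) {a : ℝ} (ha : 0 < a) {S : Matrix (Fin m) (Fin m) ℝ}
    (hS : ∀ u v, |S u v| ≤ a / 2) (T : Finset (Fin n → Fin m × Fin m × Bool))
    (s : Set (Fin n → Obs m)) (h : ∀ x ∈ T, (fun k => gz a (x k)) ∈ s) :
    ENNReal.ofReal (∑ x ∈ T, ∏ k, qd a S (x k)) ≤ (Measure.pi fun _ : Fin n => PS a S) s := by
  classical
  have := PS_prob hm ha hS
  set g : (Fin n → Fin m × Fin m × Bool) → (Fin n → Obs m) := fun x k => gz a (x k) with hg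
  have ginj : Function.Injective g := by
    intro x y hxy
    funext k
    exact gz_inj ha (congrFun hxy k)
  have h1 : ((T.image g : Finset _) : Set (Fin n → Obs m)) ⊆ s := by
    intro w hw
    simp only [Finset.coe_image, Set.mem_image, Finset.mem_coe] at hw
    obtain ⟨x, hx, rfl⟩ := hw
    exact h x hx
  refine le_trans ?_ (measure_mono h1)
  rw [← sum_measure_singleton, Finset.sum_image ginj.injOn,
    ENNReal.ofReal_sum_of_nonneg fun x _ => Finset.prod_nonneg fun k _ => qd_nonneg hm ha hS _]
  refine Finset.sum_le_sum fun x _ => ?_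
  rw [Measure.pi_singleton, ENNReal.ofReal_prod_of_nonneg fun k _ => qd_nonneg hm ha hS _]
  refine Finset.prod_le_prod' fun k _ => ?_
  rw [PS_apply]
  refine le_trans ?_ (Finset.single_le_sum (fun z _ => zero_le) (Finset.mem_univ (x k)))
  simp [hg]


def PhiM {m : ℕ} (φ : ℕ → Fin m → ℝ) : Matrix (Fin m) (Fin m) ℝ :=
  Matrix.of fun j v => φ (j + 1) v

open Matrix in
lemma PhiM_mul {m : ℕ} {φ : ℕ → Fin m → ℝ} (h : OrthonormalFamily m φ) :
    PhiM φ * (PhiM φ)ᵀ = 1 := by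
  ext i j
  have := h (i + 1) (by simp) (j + 1) (by simp)
  simp only [Matrix.mul_apply, Matrix.transpose_apply, PhiM, Matrix.of_apply, this, Matrix.one_apply]
  simp [Fin.ext_iff]

open Matrix in
lemma hs_trace {m : ℕ} (S : Matrix (Fin m) (Fin m) ℝ) : hsNormSq S = (S * Sᵀ).trace := by
  simp [hsNormSq, Matrix.trace, Matrix.mul_apply, sq]

open Matrix in
lemma hs_conj {m : ℕ} {F : Matrix (Fin m) (Fin m) ℝ} (hF : F * Fᵀ = 1)
    (A : Matrix (Fin m) (Fin m) ℝ) : hsNormSq (Fᵀ * A * F) = hsNormSq A := by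
  have e : Fᵀ * A * F * (Fᵀ * A * F)ᵀ = Fᵀ * (A * Aᵀ * F) := by
    simp only [Matrix.transpose_mul, Matrix.transpose_transpose]
    calc _ = Fᵀ * A * (F * Fᵀ) * Aᵀ * F := by simp only [Matrix.mul_assoc]
      _ = _ := by rw [hF]; simp only [Matrix.mul_assoc, Matrix.mul_one, Matrix.one_mul]
  rw [hs_trace, hs_trace, e, Matrix.trace_mul_comm, Matrix.mul_assoc, hF, Matrix.mul_one]

lemma hs_nonneg {m : ℕ} (S : Matrix (Fin m) (Fin m) ℝ) : 0 ≤ hsNormSq S :=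
  Finset.sum_nonneg fun _ _ => Finset.sum_nonneg fun _ _ => sq_nonneg _

open Matrix in
lemma sob_bound {m : ℕ} {φ : ℕ → Fin m → ℝ} (h : OrthonormalFamily m φ) (lam : ℕ → ℝ)
    (l : ℕ) (hl : 1 ≤ l) (hlm : l ≤ m)
    (mono : ∀ k l : ℕ, 1 ≤ k → k ≤ l → l ≤ m → lam k ≤ lam l)
    (A : Matrix (Fin m) (Fin m) ℝ) (hA : ∀ j k : Fin m, l ≤ k → A j k = 0) :
    sobolevHSSq lam φ ((PhiM φ)ᵀ * A * PhiM φ) ≤ lam l * hsNormSq A := by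
  have hF := PhiM_mul h
  set F := PhiM φ with hFd
  have h1 : ∀ k : Fin m, ∑ u, ((Fᵀ * A * F).mulVec (φ (k + 1)) u) ^ 2 = ∑ j, A j k ^ 2 := by
    intro k
    have e1 : ∀ u, (Fᵀ * A * F).mulVec (φ (k + 1)) u = (Fᵀ * A) u k := by
      intro u
      have : (Fᵀ * A * F * Fᵀ) u k = (Fᵀ * A) u k := by rw [Matrix.mul_assoc, hF, Matrix.mul_one]
      rw [← this]
      rw [Matrix.mul_apply]
      rfl
    have e2 : ∑ u, ((Fᵀ * A) u k) ^ 2 = ((Fᵀ * A)ᵀ * (Fᵀ * A)) k k := by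
      rw [Matrix.mul_apply]; exact Finset.sum_congr rfl fun u _ => by rw [Matrix.transpose_apply, sq]
    have e3 : (Fᵀ * A)ᵀ * (Fᵀ * A) = Aᵀ * A := by
      rw [Matrix.transpose_mul, Matrix.transpose_transpose]
      calc _ = Aᵀ * (F * Fᵀ) * A := by simp only [Matrix.mul_assoc]
        _ = _ := by rw [hF, Matrix.mul_one]
    simp only [e1]
    rw [e2, e3]
    simp [Matrix.mul_apply, sq]
  have h2 : sobolevHSSq lam φ (Fᵀ * A * F) = ∑ k : Fin m, lam (k + 1) * ∑ j, A j k ^ 2 := by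
    rw [sobolevHSSq]
    have : Finset.Icc 1 m = (Finset.range m).image (· + 1) := by
      ext k; simp only [Finset.mem_Icc, Finset.mem_image, Finset.mem_range]
      constructor
      · intro hk; exact ⟨k - 1, by omega, by omega⟩
      · rintro ⟨x, hx, rfl⟩; omega
    rw [this, Finset.sum_image (by intro a _ b _ hab; simpa using hab), Finset.sum_range]
    exact Finset.sum_congr rfl fun k _ => by rw [h1]
  rw [h2, hsNormSq, Finset.sum_comm, Finset.mul_sum]
  refine Finset.sum_le_sum fun k _ => ?_
  by_cases hk : l ≤ k
  · simp [hA _ k hk]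
  · exact mul_le_mul_of_nonneg_right (mono _ _ (by omega) (by omega) hlm)
      (Finset.sum_nonneg fun _ _ => sq_nonneg _)

open Matrix in
lemma core {m n r l : ℕ} {ρ a κ : ℝ} {lam : ℕ → ℝ} {φ : ℕ → Fin m → ℝ}
    (hm : 1 ≤ m) (hn : 1 ≤ n) (ha : 0 < a) (h : OrthonormalFamily m φ)
    (hl : 1 ≤ l) (hlm : l ≤ m)
    (mono : ∀ k l : ℕ, 1 ≤ k → k ≤ l → l ≤ m → lam k ≤ lam l)
    (I : Finset (Fin m × Fin m)) (hI : I.Nonempty)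
    (A : (Fin m × Fin m → Bool) → Matrix (Fin m) (Fin m) ℝ)
    (hκ : 0 ≤ κ)
    (hA : ∀ σ, ∀ p ∈ I, A σ p.1 p.2 = κ * sg (σ p))
    (hsymm : ∀ σ, (A σ)ᵀ = A σ) (hrank : ∀ σ, (A σ).rank ≤ r)
    (hsupp : ∀ σ, ∀ j k : Fin m, l ≤ k → A σ j k = 0)
    (hsob : ∀ σ, lam l * hsNormSq (A σ) ≤ ρ ^ 2 * (m : ℝ) ^ 2)
    (hflip : ∀ σ, ∀ p ∈ I, hsNormSq (A σ - A (bflip p σ)) ≤ a ^ 2 * (m : ℝ) ^ 2 / n)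
    (G : Finset (Fin m × Fin m → Bool))
    (hG : 4 * (Gᶜ.card : ℝ) ≤ 2 ^ (Fintype.card (Fin m × Fin m)))
    (hsup : ∀ σ ∈ G, ∀ u v, |((PhiM φ)ᵀ * A σ * PhiM φ) u v| ≤ a / 2)
    (Shat : (Fin n → Obs m) → Matrix (Fin m) (Fin m) ℝ) :
    ∃ P : Measure (Obs m), MemP m r ρ a lam φ P ∧
      ENNReal.ofReal (1 / 64) ≤ (Measure.pi fun _ : Fin n => P)
        {ω | κ ^ 2 * I.card / 64 / (m : ℝ) ^ 2 ≤ l2PiSq (Shat ω - regKernel m P)} := by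
  classical
  have hm' : (0 : ℝ) < m := by exact_mod_cast hm
  have hF := PhiM_mul h
  have hF' : (PhiM φ)ᵀ * PhiM φ = 1 := mul_eq_one_comm.1 hF
  set F := PhiM φ with hFd
  set S : (Fin m × Fin m → Bool) → Matrix (Fin m) (Fin m) ℝ := fun σ => Fᵀ * A σ * F with hS
  set est : (Fin n → Fin m × Fin m × Bool) → Fin m × Fin m → Bool := fun x p =>
    decide (0 ≤ (F * Shat (fun k => gz a (x k)) * Fᵀ) p.1 p.2) with hest
  obtain ⟨σ, hσ, hP⟩ := assouad (fun σ (x : Fin n → Fin m × Fin m × Bool) => ∏ k, qd a (S σ) (x k))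
    est I hI G
    (fun σ hσ x => Finset.prod_nonneg fun k _ => qd_nonneg hm ha (hsup σ hσ) _)
    (fun σ hσ => by
      have := Finset.prod_univ_sum (fun _ : Fin n => (univ : Finset (Fin m × Fin m × Bool)))
        (fun _ z => qd a (S σ) z)
      rw [Fintype.piFinset_univ] at this
      rw [← this]; simp [qd_sum hm])
    hG
    (fun σ hσ p hp hfl => by
      refine min_lower n hn _ _ (qd_nonneg hm ha (hsup σ hσ)) (qd_nonneg hm ha (hsup _ hfl))
        (qd_sum hm _ _) (qd_sum hm _ _) ?_
      refine qd_aff hm hn ha (hsup σ hσ) (hsup _ hfl) ?_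
      have : S σ - S (bflip p σ) = Fᵀ * (A σ - A (bflip p σ)) * F := by
        simp only [hS, Matrix.mul_sub, Matrix.sub_mul]
      rw [this, hs_conj hF]
      exact hflip σ p hp)
  have hb : ∀ u v, |S σ u v| ≤ a / 2 := hsup σ hσ
  refine ⟨PS a (S σ), ⟨PS_prob hm ha hb, PS_unif hm ha hb, PS_bdd ha _, ?_, ?_, ?_⟩, ?_⟩
  · rw [PS_reg hm ha hb]
    simp only [Matrix.IsSymm, hS, Matrix.transpose_mul, Matrix.transpose_transpose, hsymm,
      Matrix.mul_assoc]
  · rw [PS_reg hm ha hb]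
    exact (Matrix.rank_mul_le_left _ _).trans ((Matrix.rank_mul_le_right _ _).trans (hrank σ))
  · rw [PS_reg hm ha hb]
    exact (sob_bound h lam l hl hlm mono _ (hsupp σ)).trans (hsob σ)
  · refine (ENNReal.ofReal_le_ofReal hP).trans (PS_pi hm ha hb _ _ ?_)
    intro x hx
    simp only [Finset.mem_filter, Finset.mem_univ, true_and] at hx
    simp only [Set.mem_ofPred_eq, PS_reg hm ha hb, l2PiSq]
    gcongr
    set H := Shat (fun k => gz a (x k)) with hH
    have e1 : hsNormSq (H - S σ) = hsNormSq (F * H * Fᵀ - A σ) := by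
      rw [← hs_conj hF (F * H * Fᵀ - A σ)]
      congr 1
      simp only [hS, Matrix.mul_sub, Matrix.sub_mul]
      congr 1
      calc H = (Fᵀ * F) * H * (Fᵀ * F) := by rw [hF']; simp
        _ = _ := by simp only [Matrix.mul_assoc]
    rw [e1]
    set B := F * H * Fᵀ with hB
    have e2 : ∑ p ∈ I, (B p.1 p.2 - A σ p.1 p.2) ^ 2 ≤ hsNormSq (B - A σ) := by
      rw [hsNormSq, ← Fintype.sum_prod_type']
      exact Finset.sum_le_sum_of_subset_of_nonneg (Finset.subset_univ _) fun _ _ _ => sq_nonneg _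
    refine le_trans ?_ e2
    have e3 : ∑ p ∈ I.filter (fun p => est x p ≠ σ p), κ ^ 2 ≤
        ∑ p ∈ I, (B p.1 p.2 - A σ p.1 p.2) ^ 2 := by
      refine le_trans ?_ (Finset.sum_le_sum_of_subset_of_nonneg
        (Finset.filter_subset (fun p => est x p ≠ σ p) I) fun _ _ _ => sq_nonneg _)
      refine Finset.sum_le_sum fun p hp => ?_
      simp only [Finset.mem_filter] at hp
      rw [hA σ p hp.1]
      have hp2 := hp.2
      simp only [hest] at hp2
      rw [← hH, ← hB] at hp2
      cases hs : σ p <;> simp only [hs, sg] at hp2 ⊢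
      · simp at hp2 ⊢; nlinarith
      · simp at hp2 ⊢; nlinarith
    refine le_trans ?_ e3
    rw [Finset.sum_const, nsmul_eq_mul]
    nlinarith [sq_nonneg κ]


lemma Qp_bound {m : ℕ} (hm : 1 ≤ m) (hlog : 2 ≤ Real.log m) (φ : ℕ → Fin m → ℝ) (j : ℕ)
    (hj : j ∈ Finset.Icc 1 m) (v : Fin m) :
    (m : ℝ) * φ j v ^ 2 ≤ Real.exp 2 * Qp m (Real.log m) φ := by
  have hm' : (0 : ℝ) < m := by exact_mod_cast hm
  set p := Real.log m with hp
  have hp0 : 0 < p := by linarith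
  set t : ℕ → ℝ := fun j => ((∑ v, |Real.sqrt m * φ j v| ^ p) / m) ^ (2 / p) with ht
  have ht0 : ∀ j, 0 ≤ t j := fun j => by
    simp only [ht]; positivity
  have h1 : t j ≤ Qp m p φ := by
    have hb : BddAbove (Set.range fun j => ⨆ (_ : j ∈ Finset.Icc 1 m), t j) := by
      refine ⟨∑ j ∈ Finset.Icc 1 m, t j, ?_⟩
      rintro _ ⟨i, rfl⟩
      by_cases hi : i ∈ Finset.Icc 1 m
      · simp only [ciSup_pos hi]
        exact Finset.single_le_sum (fun k _ => ht0 k) hi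
      · simp only [hi]
        rw [Real.iSup_of_isEmpty]
        exact Finset.sum_nonneg fun k _ => ht0 k
    have := le_ciSup hb j
    simp only [ciSup_pos hj] at this
    exact this
  have h2 : (m : ℝ) * φ j v ^ 2 ≤ Real.exp 2 * t j := by
    have s1 : |Real.sqrt m * φ j v| ^ p ≤ ∑ v, |Real.sqrt m * φ j v| ^ p :=
      Finset.single_le_sum (f := fun v => |Real.sqrt m * φ j v| ^ p)
        (fun k _ => by positivity) (Finset.mem_univ v)
    have s2 : (|Real.sqrt m * φ j v| ^ p / m) ^ (2 / p) ≤ t j := by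
      simp only [ht]
      apply Real.rpow_le_rpow (by positivity) _ (by positivity)
      gcongr
    have s3 : (|Real.sqrt m * φ j v| ^ p / m) ^ (2 / p) = (m * φ j v ^ 2) / Real.exp 2 := by
      rw [Real.div_rpow (by positivity) (by positivity), ← Real.rpow_mul (abs_nonneg _)]
      congr 1
      · rw [show p * (2 / p) = 2 by field_simp]
        rw [Real.rpow_two, sq_abs, mul_pow, Real.sq_sqrt hm'.le]
      · rw [Real.rpow_def_of_pos hm', ← hp]
        congr 1; field_simp
    rw [s3, div_le_iff₀ (Real.exp_pos _)] at s2
    linarith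
  exact h2.trans (by gcongr)

lemma union_bound {m : ℕ} {ι Y : Type*} [Fintype ι] [DecidableEq ι] [Fintype Y]
    (hlog : 2 ≤ Real.log m) (hm : 1 ≤ m) (hY : Fintype.card Y ≤ m ^ 2)
    (x : Y → ι → ℝ) (V t : ℝ) (hV : 0 < V) (ht : 0 ≤ t)
    (hx : ∀ y, ∑ i, x y i ^ 2 ≤ V) (hL : 12 * Real.log m * V ≤ t ^ 2) :
    4 * (((((univ : Finset (ι → Bool)).filter fun σ => ∀ y, |∑ i, sg (σ i) * x y i| ≤ t)ᶜ).card : ℕ) : ℝ)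
      ≤ 2 ^ (Fintype.card ι) := by
  classical
  have hm' : (0 : ℝ) < m := by exact_mod_cast hm
  have hm3 : (3 : ℝ) ≤ m := by
    have := Real.log_le_sub_one_of_pos hm'
    linarith
  have hsub : ((univ : Finset (ι → Bool)).filter fun σ => ∀ y, |∑ i, sg (σ i) * x y i| ≤ t)ᶜ ⊆
      (univ : Finset Y).biUnion fun y =>
        (univ : Finset (ι → Bool)).filter fun σ => t < |∑ i, sg (σ i) * x y i| := by
    intro σ hσ
    simpa using hσ
  have h1 := (Finset.card_le_card hsub).trans Finset.card_biUnion_le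
  have h2 : (((((univ : Finset (ι → Bool)).filter fun σ => ∀ y, |∑ i, sg (σ i) * x y i| ≤ t)ᶜ).card : ℕ) : ℝ)
      ≤ ∑ y : Y, ((((univ : Finset (ι → Bool)).filter fun σ => t < |∑ i, sg (σ i) * x y i|).card : ℕ) : ℝ) := by
    exact_mod_cast h1
  have h3 : ∀ y ∈ (univ : Finset Y), ((((univ : Finset (ι → Bool)).filter fun σ => t < |∑ i, sg (σ i) * x y i|).card : ℕ) : ℝ)
      ≤ 2 * (2 ^ (Fintype.card ι) * Real.exp (-(6 * Real.log m))) := fun y _ =>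
    hoeff (x y) V t (6 * Real.log m) hV ht (hx y) (by linarith)
  have h4 := h2.trans (Finset.sum_le_card_nsmul _ _ _ h3)
  rw [nsmul_eq_mul, Finset.card_univ] at h4
  have h5 : Real.exp (-(6 * Real.log m)) = ((m : ℝ) ^ 6)⁻¹ := by
    rw [Real.exp_neg, mul_comm, Real.exp_mul, Real.exp_log hm']
    norm_cast
  rw [h5] at h4
  have hY' : (Fintype.card Y : ℝ) ≤ (m : ℝ) ^ 2 := by exact_mod_cast hY
  have h6 : (Fintype.card Y : ℝ) * (2 * (2 ^ (Fintype.card ι) * ((m : ℝ) ^ 6)⁻¹)) ≤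
      (m : ℝ) ^ 2 * (2 * (2 ^ (Fintype.card ι) * ((m : ℝ) ^ 6)⁻¹)) := by gcongr
  have h7 : 8 * (m : ℝ) ^ 2 * ((m : ℝ) ^ 6)⁻¹ ≤ 1 := by
    have : 8 * (m : ℝ) ^ 2 * ((m : ℝ) ^ 6)⁻¹ = 8 / (m : ℝ) ^ 4 := by field_simp
    rw [this, div_le_one (by positivity)]
    calc (8 : ℝ) ≤ 3 ^ 4 := by norm_num
      _ ≤ _ := by gcongr
  have h8 : (0 : ℝ) ≤ 2 ^ (Fintype.card ι) := by positivity
  nlinarith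

lemma card_fin_Ico {m : ℕ} (s l : ℕ) (hl : l ≤ m) :
    ((univ : Finset (Fin m)).filter fun j : Fin m => s ≤ (j : ℕ) ∧ (j : ℕ) < l).card = l - s := by
  rw [← Nat.card_Ico, ← Finset.card_image_of_injective _ Fin.val_injective]
  congr 1
  ext x
  simp only [Finset.mem_image, Finset.mem_filter, Finset.mem_univ, true_and, Finset.mem_Ico]
  constructor
  · rintro ⟨j, hj, rfl⟩; exact hj
  · intro hx; exact ⟨⟨x, by omega⟩, hx, rfl⟩

open Matrix in
lemma hs_add_transpose {m : ℕ} (C : Matrix (Fin m) (Fin m) ℝ) :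
    hsNormSq (C + Cᵀ) ≤ 4 * hsNormSq C := by
  have h1 : hsNormSq (C + Cᵀ) ≤ ∑ u, ∑ v, (2 * C u v ^ 2 + 2 * C v u ^ 2) := by
    refine Finset.sum_le_sum fun u _ => Finset.sum_le_sum fun v _ => ?_
    simp only [Matrix.add_apply, Matrix.transpose_apply]
    nlinarith [sq_nonneg (C u v - C v u)]
  refine h1.trans ?_
  simp only [Finset.sum_add_distrib, ← Finset.mul_sum]
  rw [Finset.sum_comm (f := fun u v => C v u ^ 2)]
  simp only [hsNormSq]
  linarith

lemma mat_rank_add_le {m : ℕ} (A B : Matrix (Fin m) (Fin m) ℝ) :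
    (A + B).rank ≤ A.rank + B.rank := by
  have e : LinearMap.range (A + B).mulVecLin ≤
      LinearMap.range A.mulVecLin ⊔ LinearMap.range B.mulVecLin := by
    rintro _ ⟨x, rfl⟩
    rw [Matrix.mulVecLin_add, LinearMap.add_apply]
    exact Submodule.add_mem_sup ⟨x, rfl⟩ ⟨x, rfl⟩
  exact (Submodule.finrank_mono e).trans (Submodule.finrank_add_le_finrank_add_finrank _ _)

def Iset (m s t l : ℕ) : Finset (Fin m × Fin m) :=
  ((univ : Finset (Fin m)).filter fun j : Fin m => 0 ≤ (j : ℕ) ∧ (j : ℕ) < s) ×ˢ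
  ((univ : Finset (Fin m)).filter fun j : Fin m => t ≤ (j : ℕ) ∧ (j : ℕ) < l)

lemma mem_Iset {m s t l : ℕ} (p : Fin m × Fin m) :
    p ∈ Iset m s t l ↔ (p.1 : ℕ) < s ∧ t ≤ (p.2 : ℕ) ∧ (p.2 : ℕ) < l := by
  simp [Iset]

lemma card_Iset {m s t l : ℕ} (hs : s ≤ m) (hl : l ≤ m) : (Iset m s t l).card = s * (l - t) := by
  rw [Iset, Finset.card_product, card_fin_Ico 0 s hs, card_fin_Ico t l hl, Nat.sub_zero]

def Cm {m : ℕ} (I : Finset (Fin m × Fin m)) (κ : ℝ) (σ : Fin m × Fin m → Bool) :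
    Matrix (Fin m) (Fin m) ℝ := Matrix.of fun j k => if (j, k) ∈ I then κ * sg (σ (j, k)) else 0

set_option maxHeartbeats 1600000 in
open Matrix in
lemma block_case {m n r l : ℕ} {ρ a B D : ℝ} {lam : ℕ → ℝ} {φ : ℕ → Fin m → ℝ}
    (hn : 1 ≤ n) (ha : 0 < a) (h : OrthonormalFamily m φ)
    (hlog : 2 ≤ Real.log m) (hr : 2 ≤ r)
    (hl : 2 ≤ l) (hlm : l ≤ m) (hlam : 0 ≤ lam l)
    (mono : ∀ k l : ℕ, 1 ≤ k → k ≤ l → l ≤ m → lam k ≤ lam l)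
    (hB : ∀ j v : Fin m, (m : ℝ) * PhiM φ j v ^ 2 ≤ B) (hD : 0 ≤ D)
    (hD1 : D ≤ a ^ 2 * ((min r l : ℕ) : ℝ) * l / n) (hD2 : lam l * D ≤ ρ ^ 2)
    (hD3 : D * B ^ 2 * Real.log m ≤ 55 * a ^ 2)
    (Shat : (Fin n → Obs m) → Matrix (Fin m) (Fin m) ℝ) :
    ∃ P : Measure (Obs m), MemP m r ρ a lam φ P ∧
      ENNReal.ofReal (1 / 64) ≤ (Measure.pi fun _ : Fin n => P)
        {ω | D / 76800000 ≤ l2PiSq (Shat ω - regKernel m P)} := by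
  classical
  have hm : 1 ≤ m := by omega
  have hm' : (0 : ℝ) < m := by exact_mod_cast hm
  have hn' : (0 : ℝ) < n := by exact_mod_cast hn
  set R := min r l with hR
  have hR2 : 2 ≤ R := by omega
  have hRl : R ≤ l := by omega
  have hRr : R ≤ r := by omega
  set s := R / 2 with hs
  have hs1 : 1 ≤ s := by omega
  have hs3 : R ≤ 3 * s := by omega
  have hs2 : 2 * s ≤ R := by omega
  clear_value s R
  set I := Iset m s s l with hI
  have hIc : I.card = s * (l - s) := card_Iset (by omega) hlm
  have hlR : (l : ℝ) ≤ 2 * ((l - s : ℕ) : ℝ) := by exact_mod_cast (by omega : l ≤ 2 * (l - s))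
  have hsl : ((l - s : ℕ) : ℝ) ≤ l := by exact_mod_cast (by omega : l - s ≤ l)
  have hs3' : (R : ℝ) ≤ 3 * s := by exact_mod_cast hs3
  have hs2' : (s : ℝ) ≤ R := by exact_mod_cast (by omega : s ≤ R)
  have hl0 : (0 : ℝ) < l := by exact_mod_cast (by omega : 0 < l)
  have hR0 : (0 : ℝ) < R := by exact_mod_cast (by omega : 0 < R)
  have hs0 : (0 : ℝ) ≤ s := by positivity
  have hIc' : (I.card : ℝ) = s * ((l - s : ℕ) : ℝ) := by rw [hIc]; push_cast; ring
  have hIup : (I.card : ℝ) ≤ R * l := by rw [hIc']; gcongr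
  have hIlo : (R : ℝ) * l ≤ 6 * I.card := by
    rw [hIc']
    calc (R : ℝ) * l ≤ (3 * s) * (2 * ((l - s : ℕ) : ℝ)) := by gcongr
      _ = _ := by ring
  have hIne : I.Nonempty := by
    rw [← Finset.card_pos]
    have : (0 : ℝ) < I.card := by nlinarith [mul_pos hR0 hl0]
    exact_mod_cast this
  set κ2 : ℝ := D * m ^ 2 / (200000 * (R * l)) with hκ2
  have hκ20 : 0 ≤ κ2 := by positivity
  set κ := Real.sqrt κ2 with hκ
  have hκsq : κ ^ 2 = κ2 := Real.sq_sqrt hκ20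
  have hκ0 : 0 ≤ κ := Real.sqrt_nonneg _
  have hIκ : κ ^ 2 * I.card ≤ D * m ^ 2 / 200000 := by
    rw [hκsq]
    calc κ2 * I.card ≤ κ2 * (R * l) := by gcongr
      _ = _ := by rw [hκ2]; field_simp
  set C := Cm I κ with hC
  have hCsq : ∀ σ, hsNormSq (C σ) = κ ^ 2 * I.card := by
    intro σ
    rw [hsNormSq, ← Fintype.sum_prod_type']
    have : ∀ p : Fin m × Fin m, C σ p.1 p.2 ^ 2 = if p ∈ I then κ ^ 2 else 0 := by
      intro p
      simp only [hC, Cm, Matrix.of_apply]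
      split_ifs
      · rw [mul_pow, sg_sq, mul_one]
      · simp
    simp only [this]
    rw [← Finset.sum_filter]
    simp [mul_comm]
  set x : Fin m × Fin m → Fin m × Fin m → ℝ := fun y p => if p ∈ I then
    κ * (PhiM φ p.1 y.1 * PhiM φ p.2 y.2 + PhiM φ p.1 y.2 * PhiM φ p.2 y.1) else 0 with hx
  have hS : ∀ σ u v, ((PhiM φ)ᵀ * (C σ + (C σ)ᵀ) * PhiM φ) u v = ∑ p, sg (σ p) * x (u, v) p := by
    intro σ u v
    have hq : ∀ u v, ((PhiM φ)ᵀ * (C σ) * PhiM φ) u v = 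
        ∑ p : Fin m × Fin m, sg (σ p) * if p ∈ I then κ * (PhiM φ p.1 u * PhiM φ p.2 v) else 0 := by
      intro u v
      rw [Fintype.sum_prod_type_right, Matrix.mul_apply]
      refine Finset.sum_congr rfl fun k _ => ?_
      rw [Matrix.mul_apply, Finset.sum_mul]
      refine Finset.sum_congr rfl fun j _ => ?_
      simp only [hC, Cm, Matrix.of_apply, Matrix.transpose_apply]
      split_ifs <;> ring
    have ht : ((PhiM φ)ᵀ * (C σ)ᵀ * PhiM φ) u v = ((PhiM φ)ᵀ * (C σ) * PhiM φ) v u := by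
      have : (PhiM φ)ᵀ * (C σ)ᵀ * PhiM φ = ((PhiM φ)ᵀ * (C σ) * PhiM φ)ᵀ := by
        simp only [Matrix.transpose_mul, Matrix.transpose_transpose, Matrix.mul_assoc]
      rw [this, Matrix.transpose_apply]
    rw [Matrix.mul_add, Matrix.add_mul, Matrix.add_apply, ht, hq, hq, ← Finset.sum_add_distrib]
    refine Finset.sum_congr rfl fun p _ => ?_
    simp only [hx]
    split_ifs <;> ring
  set G := (univ : Finset (Fin m × Fin m → Bool)).filter fun σ => ∀ y, |∑ p, sg (σ p) * x y p| ≤ a / 2 with hG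
  have hlog0 : 0 < Real.log m := by linarith
  have hprod : ∀ i j u v : Fin m, (PhiM φ i u * PhiM φ j v) ^ 2 ≤ (B / m) ^ 2 := by
    intro i j u v
    have b1 : PhiM φ i u ^ 2 ≤ B / m := by rw [le_div_iff₀ hm']; linarith [hB i u]
    have b2 : PhiM φ j v ^ 2 ≤ B / m := by rw [le_div_iff₀ hm']; linarith [hB j v]
    rw [mul_pow, sq (B / m)]
    exact mul_le_mul b1 b2 (sq_nonneg _) ((sq_nonneg _).trans b1)
  have hGc : 4 * (Gᶜ.card : ℝ) ≤ 2 ^ (Fintype.card (Fin m × Fin m)) := by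
    refine union_bound hlog hm (by simp [sq]) x (a ^ 2 / (48 * Real.log m)) (a / 2) (by positivity)
      (by positivity) ?_ (by apply le_of_eq; field_simp; norm_num)
    intro y
    have b1 : ∀ p, x y p ^ 2 ≤ if p ∈ I then κ ^ 2 * (4 * (B / m) ^ 2) else 0 := by
      intro p
      simp only [hx]
      split_ifs
      · rw [mul_pow]
        refine mul_le_mul_of_nonneg_left ?_ (sq_nonneg _)
        have c1 := hprod p.1 p.2 y.1 y.2
        have c2 := hprod p.1 p.2 y.2 y.1
        nlinarith [sq_nonneg (PhiM φ p.1 y.1 * PhiM φ p.2 y.2 - PhiM φ p.1 y.2 * PhiM φ p.2 y.1)]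
      · simp
    refine (Finset.sum_le_sum fun p _ => b1 p).trans ?_
    rw [← Finset.sum_filter]
    simp only [Finset.filter_mem_eq_inter, Finset.univ_inter, Finset.sum_const, nsmul_eq_mul]
    calc (I.card : ℝ) * (κ ^ 2 * (4 * (B / m) ^ 2)) = (κ ^ 2 * I.card) * (4 * (B / m) ^ 2) := by ring
      _ ≤ (D * m ^ 2 / 200000) * (4 * (B / m) ^ 2) := by gcongr
      _ = D * B ^ 2 / 50000 := by field_simp; ring
      _ ≤ _ := by
        rw [le_div_iff₀ (by positivity)]
        nlinarith [sq_pos_of_pos ha]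
  suffices hcore : ∃ P : Measure (Obs m), MemP m r ρ a lam φ P ∧
      ENNReal.ofReal (1 / 64) ≤ (Measure.pi fun _ : Fin n => P)
        {ω | κ ^ 2 * I.card / 64 / (m : ℝ) ^ 2 ≤ l2PiSq (Shat ω - regKernel m P)} by
    obtain ⟨P, hP, hP2⟩ := hcore
    refine ⟨P, hP, hP2.trans (measure_mono ?_)⟩
    intro ω hω
    simp only [Set.mem_ofPred_eq] at hω ⊢
    refine le_trans ?_ hω
    rw [hκsq, hκ2, div_div, div_le_div_iff₀ (by positivity) (by positivity), div_mul_eq_mul_div,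
      div_mul_eq_mul_div, le_div_iff₀ (by positivity)]
    nlinarith [mul_le_mul_of_nonneg_left hIlo (by positivity : (0:ℝ) ≤ D * m ^ 2)]
  refine core (r := r) (ρ := ρ) (κ := κ) hm hn ha h (by omega : 1 ≤ l) hlm mono I hIne
    (fun σ => C σ + (C σ)ᵀ) hκ0 ?_ ?_ ?_ ?_ ?_ ?_ G hGc ?_ Shat
  · rintro σ ⟨j, k⟩ hp
    have hp' := (mem_Iset _).1 hp
    simp only at hp'
    have : (k, j) ∉ I := by rw [hI, mem_Iset]; simp only; omega
    simp only [hC, Cm, Matrix.add_apply, Matrix.transpose_apply, Matrix.of_apply, hp, this]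
    simp
  · intro σ; rw [Matrix.transpose_add, Matrix.transpose_transpose, add_comm]
  · intro σ
    have hd : ∀ M : Matrix (Fin m) (Fin m) ℝ, (∀ j k : Fin m, s ≤ (j : ℕ) → M j k = 0) → M.rank ≤ s := by
      intro M hM
      have e : M = Matrix.diagonal (fun j : Fin m => if (j : ℕ) < s then (1 : ℝ) else 0) * M := by
        ext j k
        rw [Matrix.diagonal_mul]
        split_ifs with hj
        · simp
        · simp [hM j k (by omega)]
      rw [e]
      refine (Matrix.rank_mul_le_left _ _).trans ?_
      rw [Matrix.rank_diagonal, Fintype.card_subtype]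
      have := card_fin_Ico (m := m) 0 s (by omega)
      rw [Nat.sub_zero] at this
      refine le_of_eq (Eq.trans ?_ this)
      congr 1
      ext j
      simp
    have hr1 : (C σ).rank ≤ s := hd _ fun j k hj => by
      simp only [hC, Cm, Matrix.of_apply]
      rw [if_neg]
      rw [hI, mem_Iset]; simp only; omega
    refine (mat_rank_add_le _ _).trans ?_
    rw [Matrix.rank_transpose]
    omega
  · intro σ j k hk
    have h1 : (j, k) ∉ I := by rw [hI, mem_Iset]; simp only; omega
    have h2 : (k, j) ∉ I := by rw [hI, mem_Iset]; simp only; omega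
    simp [hC, Cm, h1, h2]
  · intro σ
    have h1 := hs_add_transpose (C σ)
    rw [hCsq] at h1
    calc _ ≤ lam l * (4 * (D * m ^ 2 / 200000)) := by
          refine mul_le_mul_of_nonneg_left (h1.trans ?_) hlam
          exact mul_le_mul_of_nonneg_left hIκ (by norm_num)
      _ = (lam l * D) * m ^ 2 * (4 / 200000) := by ring
      _ ≤ ρ ^ 2 * m ^ 2 * (4 / 200000) := by gcongr
      _ ≤ _ := by nlinarith [mul_nonneg (sq_nonneg ρ) (sq_nonneg (m : ℝ))]
  · intro σ p hp
    have e : C σ + (C σ)ᵀ - (C (bflip p σ) + (C (bflip p σ))ᵀ)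
        = (C σ - C (bflip p σ)) + (C σ - C (bflip p σ))ᵀ := by
      rw [Matrix.transpose_sub]; abel
    show hsNormSq (C σ + (C σ)ᵀ - (C (bflip p σ) + (C (bflip p σ))ᵀ)) ≤ _
    rw [e]
    refine (hs_add_transpose _).trans ?_
    have e2 : hsNormSq (C σ - C (bflip p σ)) ≤ 4 * κ ^ 2 := by
      rw [hsNormSq, ← Fintype.sum_prod_type', Finset.sum_eq_single p]
      · have hp1 : (p.1, p.2) ∈ I := hp
        simp only [hC, Cm, Matrix.sub_apply, Matrix.of_apply, hp1, if_true, bflip,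
          Prod.mk.eta, Function.update_self, sg_not]
        nlinarith [sg_sq (σ p)]
      · intro q _ hq
        simp only [hC, Cm, Matrix.sub_apply, Matrix.of_apply, bflip, Prod.mk.eta,
          Function.update_of_ne hq]
        simp
      · simp
    have e3 : κ ^ 2 ≤ a ^ 2 * m ^ 2 / n / 200000 := by
      rw [hκsq, hκ2]
      calc _ ≤ (a ^ 2 * (R : ℝ) * l / n) * m ^ 2 / (200000 * (R * l)) := by gcongr
        _ = _ := by field_simp
    have e4 : 0 ≤ a ^ 2 * (m : ℝ) ^ 2 / n := by positivity
    linarith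
  · intro σ hσ u v
    rw [hS]
    simp only [hG, Finset.mem_filter] at hσ
    exact hσ.2 (u, v)


def vv {m : ℕ} (l : ℕ) (ε : ℝ) (z0 : Fin m) (σ : Fin m × Fin m → Bool) (b : Fin m) : ℝ :=
  if b = z0 then 1 else if (b : ℕ) < l then ε * sg (σ (z0, b)) else 0

set_option maxHeartbeats 1600000 in
open Matrix in
lemma rank1_case {m n r l : ℕ} {ρ a B D : ℝ} {lam : ℕ → ℝ} {φ : ℕ → Fin m → ℝ}
    (hn : 1 ≤ n) (ha : 0 < a) (h : OrthonormalFamily m φ)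
    (hlog : 2 ≤ Real.log m) (hr : 1 ≤ r)
    (hl : 2 ≤ l) (hlm : l ≤ m) (hlam : 0 ≤ lam l)
    (mono : ∀ k l : ℕ, 1 ≤ k → k ≤ l → l ≤ m → lam k ≤ lam l)
    (hB0 : 0 < B)
    (hB : ∀ j v : Fin m, (m : ℝ) * PhiM φ j v ^ 2 ≤ B) (hD : 0 ≤ D)
    (hD1 : D ≤ a ^ 2 * l / n) (hD2 : lam l * D ≤ ρ ^ 2)
    (hD3 : D * B ^ 2 * l * Real.log m ≤ 55 * a ^ 2)
    (Shat : (Fin n → Obs m) → Matrix (Fin m) (Fin m) ℝ) :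
    ∃ P : Measure (Obs m), MemP m r ρ a lam φ P ∧
      ENNReal.ofReal (1 / 64) ≤ (Measure.pi fun _ : Fin n => P)
        {ω | D / 76800000 ≤ l2PiSq (Shat ω - regKernel m P)} := by
  classical
  have hm : 1 ≤ m := by omega
  have hm' : (0 : ℝ) < m := by exact_mod_cast hm
  have hn' : (0 : ℝ) < n := by exact_mod_cast hn
  have hlog0 : 0 < Real.log m := by linarith
  set z0 : Fin m := ⟨0, by omega⟩ with hz0
  set I := Iset m 1 1 l with hI
  have hIc : I.card = l - 1 := by rw [hI, card_Iset hm hlm, one_mul]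
  have hl0 : (0 : ℝ) < l := by exact_mod_cast (by omega : 0 < l)
  have hl1 : (1 : ℝ) ≤ l := by exact_mod_cast (by omega : 1 ≤ l)
  have hIup : (I.card : ℝ) ≤ l := by exact_mod_cast (by omega : I.card ≤ l)
  have hIlo : (l : ℝ) ≤ 2 * I.card := by exact_mod_cast (by omega : l ≤ 2 * I.card)
  have hIne : I.Nonempty := by
    rw [← Finset.card_pos]; omega
  have hImem : ∀ p : Fin m × Fin m, p ∈ I ↔ p.1 = z0 ∧ p.2 ≠ z0 ∧ (p.2 : ℕ) < l := by
    intro p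
    rw [hI, mem_Iset]
    simp only [Fin.ext_iff, ne_eq, hz0]
    omega
  set ε := (Real.sqrt l)⁻¹ with hε
  have hε2 : ε ^ 2 = 1 / l := by rw [hε, inv_pow, Real.sq_sqrt hl0.le, one_div]
  have hε0 : 0 < ε := by positivity
  set τ := Real.sqrt (D * m ^ 2 / 200000) with hτ
  have hτ2 : τ ^ 2 = D * m ^ 2 / 200000 := Real.sq_sqrt (by positivity)
  have hτ0 : 0 ≤ τ := Real.sqrt_nonneg _
  set v := vv l ε z0 with hv
  have hvz : ∀ σ, v σ z0 = 1 := by intro σ; simp [hv, vv]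
  have hvI : ∀ σ b, (z0, b) ∈ I → v σ b = ε * sg (σ (z0, b)) := by
    intro σ b hb
    have := (hImem _).1 hb
    simp only at this
    simp [hv, vv, this.2.1, this.2.2]
  have hvI' : ∀ σ b, b ≠ z0 → (z0, b) ∉ I → v σ b = 0 := by
    intro σ b hb hb2
    have : ¬ (b : ℕ) < l := fun hlt => hb2 ((hImem _).2 ⟨rfl, hb, hlt⟩)
    simp [hv, vv, hb, this]
  have hnorm : ∀ σ, ∑ b, v σ b ^ 2 ≤ 2 := by
    intro σ
    have b1 : ∀ b : Fin m, v σ b ^ 2 ≤ (if b = z0 then 1 else 0) +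
        (if 0 ≤ (b : ℕ) ∧ (b : ℕ) < l then 1 / (l : ℝ) else 0) := by
      intro b
      have : (0 : ℝ) ≤ 1 / (l : ℝ) := by positivity
      by_cases hb : b = z0
      · rw [hb, hvz]
        simp only [if_true]
        split_ifs <;> linarith
      · simp only [hb, if_false, hv, vv]
        by_cases hb2 : (b : ℕ) < l
        · simp [hb2, mul_pow, sg_sq, hε2]
        · simp [hb2]
    refine (Finset.sum_le_sum fun b _ => b1 b).trans ?_
    rw [Finset.sum_add_distrib, ← Finset.sum_filter, ← Finset.sum_filter, Finset.sum_const,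
      Finset.sum_const, card_fin_Ico 0 l hlm, Nat.sub_zero, nsmul_eq_mul, nsmul_eq_mul,
      mul_one_div_cancel hl0.ne']
    have : ((univ : Finset (Fin m)).filter fun b => b = z0) = {z0} := by ext b; simp
    rw [this]; norm_num
  set A : (Fin m × Fin m → Bool) → Matrix (Fin m) (Fin m) ℝ := fun σ =>
    Matrix.vecMulVec (fun j => τ * v σ j) (v σ) with hA
  have hAa : ∀ σ j k, A σ j k = τ * v σ j * v σ k := fun σ j k => rfl
  set x : Fin m → Fin m × Fin m → ℝ := fun u p => if p ∈ I then ε * PhiM φ p.2 u else 0 with hx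
  set g : (Fin m × Fin m → Bool) → Fin m → ℝ := fun σ u => ∑ j, v σ j * PhiM φ j u with hg
  have hgx : ∀ σ u, g σ u = PhiM φ z0 u + ∑ p, sg (σ p) * x u p := by
    intro σ u
    have e1 : ∑ p, sg (σ p) * x u p = ∑ k, sg (σ (z0, k)) * x u (z0, k) := by
      rw [Fintype.sum_prod_type, Finset.sum_eq_single z0]
      · intro j _ hj
        refine Finset.sum_eq_zero fun k _ => ?_
        have : (j, k) ∉ I := fun hh => hj ((hImem _).1 hh).1
        simp [hx, this]
      · simp
    have e0 : PhiM φ z0 u = ∑ k, if k = z0 then PhiM φ z0 u else 0 := by simp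
    rw [e1, e0, ← Finset.sum_add_distrib]
    refine Finset.sum_congr rfl fun k _ => ?_
    by_cases hk : k = z0
    · have : (z0, z0) ∉ I := fun hh => ((hImem _).1 hh).2.1 rfl
      subst hk
      simp [hvz, hx, this]
    · by_cases hkI : (z0, k) ∈ I
      · rw [hvI σ k hkI]
        simp only [hk, hx, hkI, if_true, if_false]; ring
      · rw [hvI' σ k hk hkI]
        simp [hk, hx, hkI]
  have hS : ∀ σ u w, ((PhiM φ)ᵀ * A σ * PhiM φ) u w = τ * g σ u * g σ w := by
    intro σ u w
    rw [Matrix.mul_apply]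
    have : ∀ k, ((PhiM φ)ᵀ * A σ) u k = τ * g σ u * v σ k := by
      intro k
      rw [Matrix.mul_apply]
      simp only [hg, Finset.mul_sum, Finset.sum_mul, hAa, Matrix.transpose_apply]
      exact Finset.sum_congr rfl fun j _ => by ring
    simp only [this]
    have hgw : g σ w = ∑ j, v σ j * PhiM φ j w := rfl
    rw [hgw]
    refine Eq.trans ?_ (Finset.mul_sum _ _ _).symm
    exact Finset.sum_congr rfl fun j _ => by ring
  have hphi : ∀ j u, PhiM φ j u ^ 2 ≤ B / m := by
    intro j u; rw [le_div_iff₀ hm']; linarith [hB j u]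
  have hBm : 0 < B / m := by positivity
  have hx2 : ∀ u, ∑ p, x u p ^ 2 ≤ B / m := by
    intro u
    have b1 : ∀ p, x u p ^ 2 ≤ if p ∈ I then 1 / l * (B / m) else 0 := by
      intro p
      simp only [hx]
      split_ifs
      · rw [mul_pow, hε2]
        exact mul_le_mul_of_nonneg_left (hphi _ _) (by positivity)
      · simp
    refine (Finset.sum_le_sum fun p _ => b1 p).trans ?_
    rw [← Finset.sum_filter]
    simp only [Finset.filter_mem_eq_inter, Finset.univ_inter, Finset.sum_const, nsmul_eq_mul]
    calc (I.card : ℝ) * (1 / l * (B / m)) ≤ l * (1 / l * (B / m)) := by gcongr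
      _ = B / m := by field_simp
  set t := Real.sqrt (12 * Real.log m * (B / m)) with ht
  have ht2 : t ^ 2 = 12 * Real.log m * (B / m) := Real.sq_sqrt (by positivity)
  set G := (univ : Finset (Fin m × Fin m → Bool)).filter fun σ => ∀ u, |∑ p, sg (σ p) * x u p| ≤ t with hG
  have hGc : 4 * (Gᶜ.card : ℝ) ≤ 2 ^ (Fintype.card (Fin m × Fin m)) := by
    have hub := union_bound hlog hm (by simp only [Fintype.card_fin]; nlinarith) x (B / m) t hBm
      (Real.sqrt_nonneg _) hx2 ht2.ge
    convert hub
  suffices hcore : ∃ P : Measure (Obs m), MemP m r ρ a lam φ P ∧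
      ENNReal.ofReal (1 / 64) ≤ (Measure.pi fun _ : Fin n => P)
        {ω | (τ * ε) ^ 2 * I.card / 64 / (m : ℝ) ^ 2 ≤ l2PiSq (Shat ω - regKernel m P)} by
    obtain ⟨P, hP, hP2⟩ := hcore
    refine ⟨P, hP, hP2.trans (measure_mono ?_)⟩
    intro ω hω
    simp only [Set.mem_ofPred_eq] at hω ⊢
    refine le_trans ?_ hω
    rw [mul_pow, hτ2, hε2]
    have e : D * (m : ℝ) ^ 2 / 200000 * (1 / l) * I.card / 64 / (m : ℝ) ^ 2
        = D * (I.card / l) / 12800000 := by field_simp; ring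
    rw [e]
    have : 1 / 2 ≤ (I.card : ℝ) / l := by rw [le_div_iff₀ hl0]; linarith
    nlinarith
  refine core (r := r) (ρ := ρ) (κ := τ * ε) hm hn ha h (by omega : 1 ≤ l) hlm mono I hIne
    A (by positivity) ?_ ?_ ?_ ?_ ?_ ?_ G hGc ?_ Shat
  · rintro σ ⟨j, k⟩ hp
    have := ((hImem _).1 hp).1
    simp only at this
    subst this
    rw [hAa, hvz, hvI σ k hp]; ring
  · intro σ
    ext j k
    rw [Matrix.transpose_apply, hAa, hAa]; ring
  · intro σ
    exact (Matrix.rank_vecMulVec_le _ _).trans hr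
  · intro σ j k hk
    have hk0 : k ≠ z0 := by
      intro hh; rw [hh, hz0] at hk; simp only at hk; omega
    have : ¬ (k : ℕ) < l := by omega
    rw [hAa]
    simp [hv, vv, hk0, this]
  · intro σ
    have h1 : hsNormSq (A σ) ≤ 4 * τ ^ 2 := by
      have : hsNormSq (A σ) = τ ^ 2 * ((∑ b, v σ b ^ 2) * (∑ b, v σ b ^ 2)) := by
        rw [Finset.sum_mul_sum, Finset.mul_sum, hsNormSq]
        refine Finset.sum_congr rfl fun j _ => ?_
        rw [Finset.mul_sum]
        exact Finset.sum_congr rfl fun k _ => by rw [hAa]; ring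
      rw [this]
      have n0 : 0 ≤ ∑ b, v σ b ^ 2 := Finset.sum_nonneg fun _ _ => sq_nonneg _
      have : (∑ b, v σ b ^ 2) * (∑ b, v σ b ^ 2) ≤ 2 * 2 :=
        mul_le_mul (hnorm σ) (hnorm σ) n0 (by norm_num)
      nlinarith [sq_nonneg τ]
    calc _ ≤ lam l * (4 * (D * m ^ 2 / 200000)) := by
          rw [← hτ2]
          exact mul_le_mul_of_nonneg_left h1 hlam
      _ = (lam l * D) * m ^ 2 * (4 / 200000) := by ring
      _ ≤ ρ ^ 2 * m ^ 2 * (4 / 200000) := by gcongr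
      _ ≤ _ := by nlinarith [mul_nonneg (sq_nonneg ρ) (sq_nonneg (m : ℝ))]
  · intro σ p hp
    set σ' := bflip p σ with hσ'
    have hd : ∑ b, (v σ b - v σ' b) ^ 2 ≤ 4 / l := by
      rw [Finset.sum_eq_single p.2]
      · have hp1 := ((hImem _).1 hp).1
        have hpe : (z0, p.2) = p := by rw [← hp1]
        have hpI : (z0, p.2) ∈ I := by rw [hpe]; exact hp
        rw [hvI σ _ hpI, hvI σ' _ hpI, hpe, hσ', bflip, Function.update_self, sg_not]
        have : (ε * sg (σ p) - ε * -sg (σ p)) ^ 2 = 4 * (ε ^ 2 * sg (σ p) ^ 2) := by ring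
        rw [this, hε2, sg_sq]
        apply le_of_eq; ring
      · intro b _ hb
        have : σ' (z0, b) = σ (z0, b) := by
          rw [hσ', bflip, Function.update_of_ne]
          intro hh; rw [← hh] at hb; exact hb rfl
        simp [hv, vv, this]
      · simp
    have key : hsNormSq (A σ - A σ') ≤ τ ^ 2 * (2 * ((∑ b, v σ b ^ 2) * (∑ b, (v σ b - v σ' b) ^ 2)
        + (∑ b, (v σ b - v σ' b) ^ 2) * (∑ b, v σ' b ^ 2))) := by
      rw [Finset.sum_mul_sum, Finset.sum_mul_sum, ← Finset.sum_add_distrib, Finset.mul_sum,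
        Finset.mul_sum, hsNormSq]
      refine Finset.sum_le_sum fun j _ => ?_
      rw [← Finset.sum_add_distrib, Finset.mul_sum, Finset.mul_sum]
      refine Finset.sum_le_sum fun k _ => ?_
      rw [Matrix.sub_apply, hAa, hAa]
      have e1 : (τ * v σ j * v σ k - τ * v σ' j * v σ' k) ^ 2 =
          τ ^ 2 * (v σ j * (v σ k - v σ' k) + (v σ j - v σ' j) * v σ' k) ^ 2 := by ring
      rw [e1]
      refine mul_le_mul_of_nonneg_left ?_ (sq_nonneg _)
      nlinarith [sq_nonneg (v σ j * (v σ k - v σ' k) - (v σ j - v σ' j) * v σ' k)]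
    have n0 : 0 ≤ ∑ b, v σ b ^ 2 := Finset.sum_nonneg fun _ _ => sq_nonneg _
    have n1 : 0 ≤ ∑ b, v σ' b ^ 2 := Finset.sum_nonneg fun _ _ => sq_nonneg _
    have n2 : 0 ≤ ∑ b, (v σ b - v σ' b) ^ 2 := Finset.sum_nonneg fun _ _ => sq_nonneg _
    refine key.trans ?_
    calc _ ≤ τ ^ 2 * (2 * (2 * (4 / l) + (4 / l) * 2)) := by
          gcongr
          · exact hnorm σ
          · exact hnorm σ'
      _ = D * (32 * m ^ 2 / (200000 * l)) := by rw [hτ2]; field_simp; ring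
      _ ≤ (a ^ 2 * l / n) * (32 * m ^ 2 / (200000 * l)) := by gcongr
      _ = (a ^ 2 * m ^ 2 / n) * (32 / 200000) := by field_simp
      _ ≤ _ := by
        have e4 : 0 ≤ a ^ 2 * (m : ℝ) ^ 2 / n := by positivity
        linarith
  · intro σ hσ u w
    simp only [hG, Finset.mem_filter] at hσ
    have g1 : ∀ u, g σ u ^ 2 ≤ 26 * Real.log m * (B / m) := by
      intro u
      have c1 := hphi z0 u
      have c2 : (∑ p, sg (σ p) * x u p) ^ 2 ≤ 12 * Real.log m * (B / m) := by
        rw [← ht2, ← sq_abs]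
        exact pow_le_pow_left₀ (abs_nonneg _) (hσ.2 u) 2
      rw [hgx]
      nlinarith [sq_nonneg (PhiM φ z0 u - ∑ p, sg (σ p) * x u p)]
    have g2 : ∀ u, g σ u ^ 2 ≤ 26 * l * (B / m) := by
      intro u
      have c1 := hphi z0 u
      have c2 : (∑ p, sg (σ p) * x u p) ^ 2 ≤ l * (B / m) := by
        have e1 : ∑ p, sg (σ p) * x u p = ∑ p ∈ I, sg (σ p) * x u p := by
          symm
          refine Finset.sum_subset (Finset.subset_univ _) fun p _ hp => ?_
          simp [hx, hp]
        rw [e1]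
        refine (sq_sum_le_card_mul_sum_sq).trans ?_
        have e2 : ∑ p ∈ I, (sg (σ p) * x u p) ^ 2 ≤ ∑ p, x u p ^ 2 := by
          refine le_trans (le_of_eq ?_) (Finset.sum_le_sum_of_subset_of_nonneg
            (Finset.subset_univ I) fun _ _ _ => sq_nonneg _)
          exact Finset.sum_congr rfl fun p _ => by rw [mul_pow, sg_sq, one_mul]
        exact mul_le_mul hIup (e2.trans (hx2 u)) (Finset.sum_nonneg fun _ _ => sq_nonneg _) hl0.le
      rw [hgx]
      nlinarith [sq_nonneg (PhiM φ z0 u - ∑ p, sg (σ p) * x u p)]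
    rw [hS]
    apply abs_le_of_sq_le_sq _ (by positivity)
    calc (τ * g σ u * g σ w) ^ 2 = τ ^ 2 * (g σ u ^ 2 * g σ w ^ 2) := by ring
      _ ≤ τ ^ 2 * ((26 * Real.log m * (B / m)) * (26 * l * (B / m))) := by
          refine mul_le_mul_of_nonneg_left ?_ (sq_nonneg _)
          exact mul_le_mul (g1 u) (g2 w) (sq_nonneg _) (by positivity)
      _ = (D * B ^ 2 * l * Real.log m) * (676 / 200000) := by rw [hτ2]; field_simp; ring
      _ ≤ (55 * a ^ 2) * (676 / 200000) := by gcongr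
      _ ≤ (a / 2) ^ 2 := by nlinarith [sq_nonneg a]


lemma mid_case {m n r l : ℕ} {ρ a B D : ℝ} {lam : ℕ → ℝ} {φ : ℕ → Fin m → ℝ}
    (hn : 1 ≤ n) (ha : 0 < a) (h : OrthonormalFamily m φ)
    (hlog : 2 ≤ Real.log m) (hr : 1 ≤ r)
    (hl : 2 ≤ l) (hlm : l ≤ m) (hlam : 0 ≤ lam l)
    (mono : ∀ k l : ℕ, 1 ≤ k → k ≤ l → l ≤ m → lam k ≤ lam l)
    (hB0 : 0 < B)
    (hB : ∀ j v : Fin m, (m : ℝ) * PhiM φ j v ^ 2 ≤ B) (hD : 0 ≤ D)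
    (hD1 : D ≤ a ^ 2 * ((min r l : ℕ) : ℝ) * l / n) (hD2 : lam l * D ≤ ρ ^ 2)
    (hD3 : D * B ^ 2 * l * Real.log m ≤ 55 * a ^ 2 * ((min r l : ℕ) : ℝ))
    (Shat : (Fin n → Obs m) → Matrix (Fin m) (Fin m) ℝ) :
    ∃ P : Measure (Obs m), MemP m r ρ a lam φ P ∧
      ENNReal.ofReal (1 / 64) ≤ (Measure.pi fun _ : Fin n => P)
        {ω | D / 76800000 ≤ l2PiSq (Shat ω - regKernel m P)} := by
  by_cases hr2 : 2 ≤ r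
  · refine block_case hn ha h hlog hr2 hl hlm hlam mono hB hD hD1 hD2 ?_ Shat
    have hl0 : (0 : ℝ) < l := by exact_mod_cast (by omega : 0 < l)
    have hmin : ((min r l : ℕ) : ℝ) ≤ l := by exact_mod_cast min_le_right r l
    have : (D * B ^ 2 * Real.log m) * l ≤ (55 * a ^ 2) * l := by
      calc (D * B ^ 2 * Real.log m) * l = D * B ^ 2 * l * Real.log m := by ring
        _ ≤ 55 * a ^ 2 * ((min r l : ℕ) : ℝ) := hD3
        _ ≤ _ := by gcongr
    exact le_of_mul_le_mul_right this hl0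
  · have hr1 : r = 1 := by omega
    subst hr1
    have hmin : min 1 l = 1 := by omega
    rw [hmin] at hD1 hD3
    refine rank1_case hn ha h hlog le_rfl hl hlm hlam mono hB0 hB hD ?_ hD2 ?_ Shat
    · simpa using hD1
    · simpa using hD3

lemma final_case {m n r l k0 : ℕ} {c ρ a D Q : ℝ} {lam : ℕ → ℝ} {φ : ℕ → Fin m → ℝ}
    (hc : 1 ≤ c) (hn : 1 ≤ n) (ha : 0 < a) (H : IsEigenData m c lam φ k0)
    (hlog : 2 ≤ Real.log m) (hr : 1 ≤ r) (hm2 : 2 ≤ m)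
    (hl : min k0 32 ≤ l) (hlm : l ≤ m) 
    (hQ : 0 < Q)
    (hB : ∀ j v : Fin m, (m : ℝ) * PhiM φ j v ^ 2 ≤ Real.exp 2 * Q) (hD : 0 ≤ D)
    (hD1 : D ≤ a ^ 2 * ((min r l : ℕ) : ℝ) * l / n) (hD2 : lam l * D ≤ ρ ^ 2)
    (hD3 : D * Q ^ 2 * l * Real.log m ≤ a ^ 2 * ((min r l : ℕ) : ℝ))
    (Shat : (Fin n → Obs m) → Matrix (Fin m) (Fin m) ℝ) :
    ∃ P : Measure (Obs m), MemP m r ρ a lam φ P ∧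
      ENNReal.ofReal (1 / 64) ≤ (Measure.pi fun _ : Fin n => P)
        {ω | (D / (2 * c)) / 76800000 ≤ l2PiSq (Shat ω - regKernel m P)} := by
  have hk1 := H.k0_mem.1
  have hl1 : 1 ≤ l := by omega
  have hexp : (Real.exp 2) ^ 2 ≤ 55 := by
    have h1 := Real.exp_one_lt_d9
    have h0 := Real.exp_pos 1
    have : (Real.exp 2) ^ 2 = Real.exp 1 ^ 4 := by
      rw [← Real.exp_nat_mul, ← Real.exp_nat_mul]; norm_num
    rw [this]
    calc Real.exp 1 ^ 4 ≤ (2.7182818286 : ℝ) ^ 4 := by gcongr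
      _ ≤ 55 := by norm_num
  have hc0 : 0 < c := by linarith
  have hB0 : 0 < Real.exp 2 * Q := by positivity
  have hD' : 0 ≤ D / (2 * c) := by positivity
  have hlg : 0 < Real.log m := by linarith
  have hDle : D / (2 * c) ≤ D / 2 := by
    apply div_le_div_of_nonneg_left hD (by norm_num) (by linarith)
  by_cases hl2 : 2 ≤ l
  · refine mid_case hn ha H.orth hlog hr hl2 hlm (H.nonneg l (by simp; omega)) H.mono hB0 hB hD' ?_ ?_ ?_ Shat
    · linarith
    · have : lam l * (D / (2 * c)) ≤ lam l * D :=
        mul_le_mul_of_nonneg_left (by linarith) (H.nonneg l (by simp; omega))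
      linarith
    · calc D / (2 * c) * (Real.exp 2 * Q) ^ 2 * l * Real.log m
          ≤ D * (Real.exp 2 * Q) ^ 2 * l * Real.log m := by gcongr; linarith
        _ = (Real.exp 2) ^ 2 * (D * Q ^ 2 * l * Real.log m) := by ring
        _ ≤ 55 * (D * Q ^ 2 * l * Real.log m) := by gcongr
        _ ≤ 55 * (a ^ 2 * ((min r l : ℕ) : ℝ)) := by gcongr
        _ = _ := by ring
  · have hl1' : l = 1 := by omega
    subst hl1'
    have hk : k0 = 1 := by omega
    have hr1 : min r 1 = 1 := by omega
    rw [hr1] at hD1 hD3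
    push_cast at hD1 hD3
    have hmr : (1 : ℝ) ≤ ((min r 2 : ℕ) : ℝ) := by exact_mod_cast (by omega : 1 ≤ min r 2)
    have hlam2 := H.ratio 1 (by omega) (by omega)
    norm_num at hlam2
    have hn0 : (0 : ℝ) < n := by exact_mod_cast hn
    refine mid_case (l := 2) hn ha H.orth hlog hr le_rfl hm2 (H.nonneg 2 (by simp; omega)) H.mono hB0 hB hD' ?_ ?_ ?_ Shat
    · have : a ^ 2 * 1 * 1 / n ≤ a ^ 2 * ((min r 2 : ℕ) : ℝ) * ((2 : ℕ) : ℝ) / n := by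
        gcongr; norm_num
      linarith
    · calc lam 2 * (D / (2 * c)) ≤ c * lam 1 * (D / (2 * c)) := by gcongr
        _ = lam 1 * D / 2 := by field_simp
        _ ≤ ρ ^ 2 := by
          have := mul_nonneg (H.nonneg 1 (by simp; omega)) hD
          linarith
    · push_cast at *
      calc D / (2 * c) * (Real.exp 2 * Q) ^ 2 * 2 * Real.log m
          ≤ D / 2 * (Real.exp 2 * Q) ^ 2 * 2 * Real.log m := by gcongr
        _ = (Real.exp 2) ^ 2 * (D * Q ^ 2 * 1 * Real.log m) := by ring
        _ ≤ 55 * (D * Q ^ 2 * 1 * Real.log m) := by gcongr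
        _ ≤ 55 * (a ^ 2 * 1) := by gcongr
        _ ≤ _ := by nlinarith [sq_nonneg a]

lemma delta_attained {m n r l0 : ℕ} {ρ a Q : ℝ} {lam : ℕ → ℝ} (hne : l0 ≤ m) (hl0 : 1 ≤ l0)
    (hlog : 0 < Real.log m) (hQ : 0 < Q) (hlam : ∀ k ∈ Finset.Icc 1 m, 0 ≤ lam k) :
    ∃ l D, l0 ≤ l ∧ l ≤ m ∧ 0 ≤ D ∧ delta2 m n r l0 ρ a Q lam = ENNReal.ofReal D ∧
      D ≤ a ^ 2 * ((min r l : ℕ) : ℝ) * l / n ∧ lam l * D ≤ ρ ^ 2 ∧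
      D * Q ^ 2 * l * Real.log m ≤ a ^ 2 * ((min r l : ℕ) : ℝ) := by
  unfold delta2
  rw [← Finset.sup_eq_iSup]
  obtain ⟨l, hl, he⟩ := Finset.exists_mem_eq_sup (Finset.Icc l0 m) ⟨l0, by simp [hne]⟩ (fun l : ℕ =>
    min (ENNReal.ofReal (a ^ 2 * (min r l : ℝ) * (l : ℝ) / n))
      (min (ENNReal.ofReal (ρ ^ 2) / ENNReal.ofReal (lam l))
        (ENNReal.ofReal
          ((1 / Q ^ 2) * (a ^ 2 * (min r l : ℝ) / l) * (1 / Real.log m)))))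
  rw [he]
  rw [Finset.mem_Icc] at hl
  set T := min (ENNReal.ofReal (a ^ 2 * (min r l : ℝ) * (l : ℝ) / n))
      (min (ENNReal.ofReal (ρ ^ 2) / ENNReal.ofReal (lam l))
        (ENNReal.ofReal
          ((1 / Q ^ 2) * (a ^ 2 * (min r l : ℝ) / l) * (1 / Real.log m)))) with hT
  have t1 : T ≤ ENNReal.ofReal (a ^ 2 * (min r l : ℝ) * (l : ℝ) / n) := min_le_left _ _
  have t2 : T ≤ ENNReal.ofReal (ρ ^ 2) / ENNReal.ofReal (lam l) :=
    (min_le_right _ _).trans (min_le_left _ _)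
  have t3 : T ≤ ENNReal.ofReal
          ((1 / Q ^ 2) * (a ^ 2 * (min r l : ℝ) / l) * (1 / Real.log m)) :=
    (min_le_right _ _).trans (min_le_right _ _)
  have hfin : T ≠ ⊤ := ne_top_of_le_ne_top ENNReal.ofReal_ne_top t1
  have hTD : T = ENNReal.ofReal T.toReal := (ENNReal.ofReal_toReal hfin).symm
  have hll : (0 : ℝ) < l := by exact_mod_cast (by omega : 0 < l)
  have hlaml : 0 ≤ lam l := hlam l (by simp; omega)
  refine ⟨l, T.toReal, hl.1, hl.2, ENNReal.toReal_nonneg, hTD, ?_, ?_, ?_⟩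
  · rw [Nat.cast_min]
    exact ENNReal.toReal_le_of_le_ofReal (by positivity) t1
  · rcases hlaml.eq_or_lt with h0 | h0
    · rw [← h0]; simp; positivity
    · rw [← ENNReal.ofReal_div_of_pos h0] at t2
      have := ENNReal.toReal_le_of_le_ofReal (by positivity) t2
      rw [le_div_iff₀ h0] at this
      linarith
  · have := ENNReal.toReal_le_of_le_ofReal (by positivity) t3
    rw [Nat.cast_min]
    calc T.toReal * Q ^ 2 * l * Real.log m
        ≤ ((1 / Q ^ 2) * (a ^ 2 * (min r l : ℝ) / l) * (1 / Real.log m)) * Q ^ 2 * l * Real.log m := by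
          gcongr
      _ = _ := by field_simp

lemma Qp_pos' {m : ℕ} (hm : 1 ≤ m) (hlog : 2 ≤ Real.log m) (φ : ℕ → Fin m → ℝ)
    (h : OrthonormalFamily m φ) : 0 < Qp m (Real.log m) φ := by
  by_contra hneg
  have h1 := h 1 (by simp [hm]) 1 (by simp [hm])
  simp only [if_true] at h1
  have hm' : (0 : ℝ) < m := by exact_mod_cast hm
  have hz : ∀ v, φ 1 v * φ 1 v = 0 := by
    intro v
    have hb := Qp_bound hm hlog φ 1 (by simp [hm]) v
    have : Real.exp 2 * Qp m (Real.log m) φ ≤ 0 :=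
      mul_nonpos_of_nonneg_of_nonpos (Real.exp_pos _).le (not_lt.1 hneg)
    have h2 : φ 1 v ^ 2 ≤ 0 := by
      by_contra h3
      have := mul_pos hm' (not_le.1 h3)
      linarith
    nlinarith [sq_nonneg (φ 1 v)]
  simp [hz] at h1


/-- **Corollary 1 (minimax lower bound with `p = log m`).** -/
theorem minimax_lower_bound_logm (c : ℝ) (hc : 1 ≤ c) :
    ∃ c₁ > (0 : ℝ), ∃ c₂ > (0 : ℝ),
      ∀ (m n r k0 : ℕ) (ρ a : ℝ) (lam : ℕ → ℝ) (φ : ℕ → Fin m → ℝ),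
        1 ≤ m → 1 ≤ n → 1 ≤ r → r ≤ m → 0 < ρ → 0 < a →
        2 ≤ Real.log m →
        IsEigenData m c lam φ k0 →
        ∀ Shat : (Fin n → Obs m) → Matrix (Fin m) (Fin m) ℝ,
          (∀ u v : Fin m, Measurable fun ω => Shat ω u v) →
          ENNReal.ofReal c₂ ≤
            ⨆ (P : Measure (Obs m)) (_ : MemP m r ρ a lam φ P),
              (Measure.pi fun _ : Fin n => P)
                {ω | ENNReal.ofReal c₁ *
                    delta2 m n r (min k0 32) ρ a (Qp m (Real.log m) φ) lam ≤
                  ENNReal.ofReal (l2PiSq (Shat ω - regKernel m P))} := by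
  refine ⟨1 / (76800000 * (2 * c)), by positivity, 1 / 64, by norm_num, ?_⟩
  intro m n r k0 ρ a lam φ hm hn hr hrm hρ ha hlog H Shat _
  have hQ := Qp_pos' hm hlog φ H.orth
  have hk := H.k0_mem
  have hm2 : 2 ≤ m := by
    by_contra hh
    have : m = 1 := by omega
    subst this
    norm_num at hlog
  obtain ⟨l, D, hl, hlm, hD, hdel, hD1, hD2, hD3⟩ :=
    delta_attained (m := m) (n := n) (r := r) (l0 := min k0 32) (ρ := ρ) (a := a)
      (Q := Qp m (Real.log m) φ) (lam := lam) (by omega) (by omega) (by linarith) hQ H.nonneg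
  obtain ⟨P, hP, hle⟩ := final_case hc hn ha H hlog hr hm2 hl hlm hQ
    (fun j v => Qp_bound hm hlog φ (j + 1) (by simp) v) hD hD1 hD2 hD3 Shat
  refine hle.trans (le_iSup₂_of_le P hP (measure_mono ?_))
  intro ω hω
  simp only [Set.mem_setOf_eq] at hω ⊢
  rw [hdel, ← ENNReal.ofReal_mul (by positivity)]
  refine ENNReal.ofReal_le_ofReal (le_trans (le_of_eq ?_) hω)
  field_simp

end
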